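/- For any g₁,...,g_n ∈ G = GL₂⁺(ℚ) modulo scalars, the image of the upper half plane ℍ under the map f(z) = (j(g₁z),...,j(g_nz)) is a geometrically irreducible algebraic curve in ℂⁿ defined over ℚ(j(S)), where S is the set of special points; moreover this image is a strongly special subvariety of ℂⁿ and contains infinitely many special points. -/

import Mathlib

set_option synthInstance.maxHeartbeats 800000
set_option maxHeartbeats 1600000
noncomputable section
open UpperHalfPlane Matrix MatrixGroups Classical

namespace JPaper

/-! ### The group `G = GL₂⁺(ℚ)` modulo scalars and its action on `ℍ` -/

/-- `GL₂⁺(ℚ)`, the group of 2×2 rational matrices with positive determinant. -/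
abbrev GL2QPos : Type := Matrix.GLPos (Fin 2) ℚ

lemma map_mem_glpos (g : GL2QPos) :
    (Matrix.GeneralLinearGroup.map (algebraMap ℚ ℝ) : GL (Fin 2) ℚ →* GL (Fin 2) ℝ) g ∈
      Matrix.GLPos (Fin 2) ℝ := by
  have hg := g.2
  rw [Matrix.mem_glpos] at hg ⊢
  rw [Matrix.GeneralLinearGroup.val_det_apply] at hg ⊢
  show (0:ℝ) < Matrix.det _
  have : ((Matrix.GeneralLinearGroup.map (algebraMap ℚ ℝ) (g : GL (Fin 2) ℚ) :
      GL (Fin 2) ℝ) : Matrix (Fin 2) (Fin 2) ℝ) = ((g : GL (Fin 2) ℚ) :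
      Matrix (Fin 2) (Fin 2) ℚ).map (algebraMap ℚ ℝ) := rfl
  rw [this, ← RingHom.mapMatrix_apply, ← RingHom.map_det]
  simpa using (Rat.cast_pos (K := ℝ)).mpr hg

/-- The homomorphism `GL₂⁺(ℚ) →* GL₂⁺(ℝ)` induced by `ℚ ⊆ ℝ`. -/
def toGLPosR : GL2QPos →* Matrix.GLPos (Fin 2) ℝ :=
  MonoidHom.codRestrict
    ((Matrix.GeneralLinearGroup.map (algebraMap ℚ ℝ)).comp (Matrix.GLPos (Fin 2) ℚ).subtype)
    (Matrix.GLPos (Fin 2) ℝ) (fun g => map_mem_glpos g)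

/-- `G := GL₂⁺(ℚ)ᵃᵈ`, i.e. `GL₂⁺(ℚ)` modulo its centre (the scalar matrices). -/
abbrev GQ : Type := GL2QPos ⧸ Subgroup.center GL2QPos

/-- The action of an element of `G = GL₂⁺(ℚ)` modulo scalars on the upper half plane,
via a choice of representative (the centre acts trivially on `ℍ`, so this recovers the
natural action by Möbius transformations). -/
def gqSmul (g : GQ) (τ : ℍ) : ℍ := toGLPosR g.out • τ

/-- The image of `SL₂(ℤ)` in `GL₂⁺(ℚ)`. -/
def sl2ZtoGLQ (γ : Matrix.SpecialLinearGroup (Fin 2) ℤ) : GL2QPos :=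
  ⟨Matrix.SpecialLinearGroup.toGL
      (Matrix.SpecialLinearGroup.map (Int.castRingHom ℚ) γ), by
    rw [Matrix.mem_glpos, Matrix.GeneralLinearGroup.val_det_apply]
    show (0:ℚ) < Matrix.det _
    have : ((Matrix.SpecialLinearGroup.toGL
        (Matrix.SpecialLinearGroup.map (Int.castRingHom ℚ) γ) : GL (Fin 2) ℚ) :
        Matrix (Fin 2) (Fin 2) ℚ).det = 1 :=
      (Matrix.SpecialLinearGroup.map (Int.castRingHom ℚ) γ).2
    rw [this]; norm_num⟩

/-- The image of `SL₂(ℤ)` in `G = GL₂⁺(ℚ)` modulo scalars. -/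
def sl2ZtoGQ (γ : Matrix.SpecialLinearGroup (Fin 2) ℤ) : GQ :=
  QuotientGroup.mk (sl2ZtoGLQ γ)

/-! ### The modular `j`-function and special points -/

/-- The classical modular `j`-function on the upper half plane, defined via the
Eisenstein series `g₂, g₃` of the lattice `ℤτ + ℤ`. -/
def jFunction (τ : ℍ) : ℂ :=
  let g2 : ℂ := 60 * ∑' p : ℤ × ℤ,
    if p = 0 then 0 else (((p.1 : ℂ) * (τ : ℂ) + (p.2 : ℂ)) ^ 4)⁻¹
  let g3 : ℂ := 140 * ∑' p : ℤ × ℤ,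
    if p = 0 then 0 else (((p.1 : ℂ) * (τ : ℂ) + (p.2 : ℂ)) ^ 6)⁻¹
  1728 * g2 ^ 3 / (g2 ^ 3 - 27 * g3 ^ 2)

/-- A point of `ℍ` is special (a CM point) if it is fixed by some nontrivial element
of `G = GL₂⁺(ℚ)` modulo scalars. -/
def IsSpecial (τ : ℍ) : Prop := ∃ g : GQ, g ≠ 1 ∧ gqSmul g τ = τ

/-- The set of special points of `ℍ`. -/
def SpecialSet : Set ℍ := {τ | IsSpecial τ}

/-- The set `j(S) ⊆ ℂ` of singular moduli, i.e. `j`-values of special points. -/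
def jSpecialValues : Set ℂ := jFunction '' SpecialSet

/-- The subfield `ℚ(j(S))` of `ℂ` generated by the singular moduli. -/
def QjS : Subfield ℂ := Subfield.closure jSpecialValues

/-- An integral matrix is primitive if the gcd of its entries is 1. -/
def IsPrimitiveIntMatrix (A : Matrix (Fin 2) (Fin 2) ℤ) : Prop :=
  Int.gcd (Int.gcd (A 0 0) (A 0 1)) (Int.gcd (A 1 0) (A 1 1)) = 1

/-- `G_N`: the set of elements of `G` which, after multiplying through by an integer to
clear denominators in all entries, have determinant `N`. -/
def GQdet (N : ℕ) : Set GQ :=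
  {g | ∃ A : Matrix (Fin 2) (Fin 2) ℤ, IsPrimitiveIntMatrix A ∧ A.det = (N : ℤ) ∧
    ∃ c : ℚ, ((g.out : GL (Fin 2) ℚ) : Matrix (Fin 2) (Fin 2) ℚ) =
      c • A.map (fun x => (x : ℚ))}

/-- The `N`-th classical modular polynomial `Φ_N ∈ ℤ[X,Y]`, characterised by the property
that `Φ_N(z,w) = 0` iff `z` and `w` are the `j`-invariants of elliptic curves related by a
cyclic `N`-isogeny, i.e. iff `w = j(gτ)`, `z = j(τ)` for some `τ ∈ ℍ` and `g ∈ G_N`. -/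
def modularPoly (N : ℕ) : MvPolynomial (Fin 2) ℤ :=
  if h : ∃ P : MvPolynomial (Fin 2) ℤ, P ≠ 0 ∧ ∀ z w : ℂ,
      (MvPolynomial.aeval ![z, w]) P = 0 ↔
        ∃ (τ : ℍ) (g : GQ), g ∈ GQdet N ∧ jFunction τ = z ∧ jFunction (gqSmul g τ) = w
  then h.choose else 0


variable {n : ℕ}

/-- The image of `ℍ` under `z ↦ (j(g₁z), ..., j(gₙz))`. -/
def heckeImage (g : Fin n → GQ) : Set (Fin n → ℂ) :=
  Set.range (fun τ : ℍ => fun i => jFunction (gqSmul (g i) τ))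

/-- A subset of `ℂⁿ` is an (affine) algebraic set if it is the common zero locus of a
family of polynomials. -/
def IsAlgebraicSet (V : Set (Fin n → ℂ)) : Prop :=
  ∃ ps : Set (MvPolynomial (Fin n) ℂ),
    V = {v | ∀ p ∈ ps, MvPolynomial.eval v p = 0}

/-- A subset of `ℂⁿ` is an algebraic set defined over a subfield `k ⊆ ℂ` if it is the
common zero locus of a family of polynomials with coefficients in `k`. -/
def IsAlgebraicSetOver (k : Subfield ℂ) (V : Set (Fin n → ℂ)) : Prop :=
  ∃ ps : Set (MvPolynomial (Fin n) ℂ),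
    (∀ p ∈ ps, ∀ m, p.coeff m ∈ k) ∧
    V = {v | ∀ p ∈ ps, MvPolynomial.eval v p = 0}

/-- A (geometrically) irreducible algebraic set: a nonempty algebraic set which is not
covered by two algebraic sets unless it is contained in one of them. -/
def IsIrreducibleAlgSet (V : Set (Fin n → ℂ)) : Prop :=
  IsAlgebraicSet V ∧ V.Nonempty ∧
    ∀ A B : Set (Fin n → ℂ), IsAlgebraicSet A → IsAlgebraicSet B →
      V ⊆ A ∪ B → V ⊆ A ∨ V ⊆ B

/-- An algebraic set is a curve if it is infinite and some coordinate projection has all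
fibres finite (i.e. it has dimension one). -/
def IsAlgebraicCurve (V : Set (Fin n → ℂ)) : Prop :=
  IsAlgebraicSet V ∧ V.Infinite ∧ ∃ i : Fin n, ∀ z : ℂ, {v ∈ V | v i = z}.Finite

/-- A strongly special subvariety of `ℂⁿ` (for the product of modular curves): an
irreducible algebraic set, with no constant coordinate, which is an irreducible component
of an algebraic set cut out by modular polynomial relations `Φ_N(x_k, x_l) = 0` among the
coordinates. -/
def IsStronglySpecial (V : Set (Fin n → ℂ)) : Prop :=
  IsIrreducibleAlgSet V ∧
  (∀ i : Fin n, ¬ ∃ c : ℂ, ∀ v ∈ V, v i = c) ∧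
  ∃ R : Set (Fin n × Fin n × ℕ),
    (∀ r ∈ R, 0 < r.2.2) ∧
    (V ⊆ {v | ∀ r ∈ R, MvPolynomial.aeval ![v r.1, v r.2.1] (modularPoly r.2.2) = 0}) ∧
    (∀ V' : Set (Fin n → ℂ), IsIrreducibleAlgSet V' → V ⊆ V' →
      V' ⊆ {v | ∀ r ∈ R, MvPolynomial.aeval ![v r.1, v r.2.1] (modularPoly r.2.2) = 0} →
      V' = V)

end JPaper

namespace JPaper

open Filter Topology Asymptotics ModularForm Function Polynomial
open scoped Manifold

/-! ### The `j`-function as a quotient of modular forms -/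

lemma tsum_eisenstein_eq {k : ℕ} (hk : 3 ≤ k) (τ : ℍ) :
    ∑' p : ℤ × ℤ, (if p = 0 then 0 else (((p.1 : ℂ) * (τ : ℂ) + (p.2 : ℂ)) ^ k)⁻¹) =
      2 * riemannZeta k * E hk τ := by
  have h : E hk τ = (1 / 2 : ℂ) * eisensteinSeries (N := 1) 0 k τ := rfl
  rw [h, show 2 * riemannZeta k * ((1 / 2 : ℂ) * eisensteinSeries (N := 1) 0 k τ) =
    riemannZeta k * eisensteinSeries (N := 1) 0 k τ by ring,
    ← tsum_eisSummand_eq_riemannZeta_mul_eisensteinSeries hk τ,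
    ← (finTwoArrowEquiv ℤ).symm.tsum_eq]
  refine tsum_congr fun p ↦ ?_
  split_ifs with hp
  · subst hp
    simp [EisensteinSeries.eisSummand, show k ≠ 0 by omega]
  · simp [EisensteinSeries.eisSummand]

lemma riemannZeta_six : riemannZeta 6 = (Real.pi : ℂ) ^ 6 / 945 := by
  have h := riemannZeta_two_mul_nat (k := 3) (by norm_num)
  have hB : _root_.bernoulli 6 = 1 / 42 := by
    rw [bernoulli_eq_bernoulli'_of_ne_one (by decide), bernoulli'_def]
    norm_num [Finset.sum_range_succ, Nat.choose,
      bernoulli'_eq_zero_of_odd (n := 5) (by decide) (by decide)]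
  norm_num [hB, show Nat.factorial 6 = 720 by decide] at h
  rw [h]
  ring

lemma jFunction_eq (τ : ℍ) : jFunction τ = E₄ τ ^ 3 / ModularForm.discriminant τ := by
  have h4 := tsum_eisenstein_eq (show 3 ≤ 4 by norm_num) τ
  have h6 := tsum_eisenstein_eq (show 3 ≤ 6 by norm_num) τ
  have hΔ := discriminant_eq_E₄_cube_sub_E₆_sq τ
  have hΔ0 := ModularForm.discriminant_ne_zero τ
  have hπ : (Real.pi : ℂ) ≠ 0 := by exact_mod_cast Real.pi_ne_zero
  unfold jFunction
  simp only [h4, h6]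
  push_cast
  rw [riemannZeta_four, riemannZeta_six, div_eq_div_iff _ hΔ0]
  · rw [hΔ]; ring
  · have : (60 * (2 * ((Real.pi : ℂ) ^ 4 / 90) * E₄ τ)) ^ 3 -
        27 * (140 * (2 * ((Real.pi : ℂ) ^ 6 / 945) * E₆ τ)) ^ 2 =
        4096 * (Real.pi : ℂ) ^ 12 * ModularForm.discriminant τ := by
      rw [hΔ]; ring
    rw [this]
    exact mul_ne_zero (mul_ne_zero (by norm_num) (pow_ne_zero _ hπ)) hΔ0

lemma apply_smul_of_slashInvariant {F : Type*} [FunLike F ℍ ℂ] {k : ℤ}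
    [SlashInvariantFormClass F 𝒮ℒ k] (f : F) (γ : SL(2, ℤ)) (τ : ℍ) :
    f (γ • τ) = denom γ τ ^ k * f τ := by
  have h := congrFun (SlashInvariantForm.slash_action_eqn (Γ := 𝒮ℒ) f
    (γ : GL (Fin 2) ℝ) ⟨γ, rfl⟩) τ
  rw [← SL_slash, SL_slash_apply, _root_.zpow_neg] at h
  have hd := zpow_ne_zero k (denom_ne_zero (γ : GL (Fin 2) ℝ) τ)
  rw [← h]
  field_simp

lemma jFunction_smul (γ : SL(2, ℤ)) (τ : ℍ) : jFunction (γ • τ) = jFunction τ := by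
  have h4 := apply_smul_of_slashInvariant E₄ γ τ
  have h12 : ModularForm.discriminant (γ • τ) = denom γ τ ^ (12 : ℤ) *
    ModularForm.discriminant τ := apply_smul_of_slashInvariant CuspForm.discriminant γ τ
  have hd := denom_ne_zero (γ : GL (Fin 2) ℝ) τ
  have hΔ0 := ModularForm.discriminant_ne_zero τ
  rw [jFunction_eq, jFunction_eq, h4, h12, div_eq_div_iff
    (mul_ne_zero (zpow_ne_zero _ hd) hΔ0) hΔ0, mul_pow, ← zpow_natCast, ← _root_.zpow_mul]
  norm_num
  ring

lemma mdifferentiable_jFunction : MDiff jFunction := by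
  have h : jFunction = fun τ ↦ E₄ τ ^ 3 / CuspForm.discriminant τ := funext jFunction_eq
  rw [h]
  exact (E₄.holo'.pow 3).div CuspForm.discriminant.holo' ModularForm.discriminant_ne_zero

lemma tendsto_valueAtInfty {f : ℍ → ℂ} (hper : Periodic (f ∘ ofComplex) 1)
    (hhol : MDiff f) (hbdd : IsBoundedAtImInfty f) :
    Tendsto f atImInfty (𝓝 (valueAtInfty f)) := by
  have hper' : Periodic (f ∘ ofComplex) ((1 : ℝ) : ℂ) := by simpa using hper
  have hcts := (analyticAt_cuspFunction_zero one_pos hper' hhol hbdd)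
  have h := hcts.continuousAt.tendsto.comp (qParam_tendsto_atImInfty one_pos)
  rw [cuspFunction_apply_zero one_pos hcts hper'] at h
  exact h.congr fun τ ↦ eq_cuspFunction τ one_ne_zero hper'

lemma periodic_of_slashInvariant {F : Type*} [FunLike F ℍ ℂ] {k : ℤ}
    [SlashInvariantFormClass F 𝒮ℒ k] (f : F) : Periodic (f ∘ ofComplex) 1 := by
  simpa using SlashInvariantFormClass.periodic_comp_ofComplex f one_mem_strictPeriods_SL

lemma tendsto_E₄_atImInfty : Tendsto E₄ atImInfty (𝓝 1) := by
  have hper := periodic_of_slashInvariant E₄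
  have hbdd : IsBoundedAtImInfty E₄ := ModularFormClass.bdd_at_infty E₄
  have h := tendsto_valueAtInfty hper E₄.holo' hbdd
  have hper' : Periodic (E₄ ∘ ofComplex) ((1 : ℝ) : ℂ) := by simpa using hper
  rwa [← qExpansion_coeff_zero one_pos
    (analyticAt_cuspFunction_zero one_pos hper' E₄.holo' hbdd) hper',
    EisensteinSeries.E_qExpansion_coeff_zero _ ⟨2, rfl⟩] at h

lemma tendsto_qParam_mul_jFunction :
    Tendsto (fun τ : ℍ ↦ Periodic.qParam 1 τ * jFunction τ) atImInfty (𝓝 1) := by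
  have h := (tendsto_E₄_atImInfty.pow 3).div tendsto_atImInfty_tprod_one_sub_eta_q_pow one_ne_zero
  simp only [one_pow, div_one] at h
  refine h.congr fun τ ↦ ?_
  rw [jFunction_eq, discriminant_eq_q_prod]
  have hq : Periodic.qParam 1 (τ : ℂ) ≠ 0 := Complex.exp_ne_zero _
  simp only [Pi.div_apply]
  field_simp

/-! ### Holomorphic functions of moderate growth and polynomials in `j` -/

lemma isBoundedAtImInfty_qParam_pow (k : ℕ) :
    IsBoundedAtImInfty fun τ : ℍ ↦ Periodic.qParam 1 (τ : ℂ) ^ k :=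
  ((qParam_tendsto_atImInfty one_pos).pow k).isBigO_one ℝ

/-- Holomorphic functions on `ℍ` with at most exponential growth at `i∞`. -/
def moderateHolomorphic : Subalgebra ℂ (ℍ → ℂ) where
  carrier := {f | MDiff f ∧
    ∃ k : ℕ, IsBoundedAtImInfty fun τ ↦ Periodic.qParam 1 (τ : ℂ) ^ k * f τ}
  mul_mem' := by
    rintro f g ⟨hf, k, hk⟩ ⟨hg, l, hl⟩
    refine ⟨hf.mul hg, k + l, ?_⟩
    have h : (fun τ : ℍ ↦ Periodic.qParam 1 (τ : ℂ) ^ (k + l) * (f * g) τ) =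
        (fun τ : ℍ ↦ Periodic.qParam 1 (τ : ℂ) ^ k * f τ) *
          fun τ : ℍ ↦ Periodic.qParam 1 (τ : ℂ) ^ l * g τ := by
      ext τ
      simp only [Pi.mul_apply]
      ring
    exact h ▸ hk.mul hl
  add_mem' := by
    rintro f g ⟨hf, k, hk⟩ ⟨hg, l, hl⟩
    refine ⟨hf.add hg, k + l, ?_⟩
    have h : (fun τ : ℍ ↦ Periodic.qParam 1 (τ : ℂ) ^ (k + l) * (f + g) τ) =
        (fun τ : ℍ ↦ Periodic.qParam 1 (τ : ℂ) ^ l) *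
          (fun τ : ℍ ↦ Periodic.qParam 1 (τ : ℂ) ^ k * f τ) +
          (fun τ : ℍ ↦ Periodic.qParam 1 (τ : ℂ) ^ k) *
            fun τ : ℍ ↦ Periodic.qParam 1 (τ : ℂ) ^ l * g τ := by
      ext τ
      simp only [Pi.mul_apply, Pi.add_apply]
      ring
    exact h ▸ ((isBoundedAtImInfty_qParam_pow l).mul hk).add
      ((isBoundedAtImInfty_qParam_pow k).mul hl)
  algebraMap_mem' c := by
    refine ⟨mdifferentiable_const, 0, ?_⟩
    simp only [pow_zero, one_mul]
    exact const_boundedAtFilter atImInfty c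

lemma mem_moderateHolomorphic {f : ℍ → ℂ} : f ∈ moderateHolomorphic ↔ MDiff f ∧
    ∃ k : ℕ, IsBoundedAtImInfty fun τ ↦ Periodic.qParam 1 (τ : ℂ) ^ k * f τ := Iff.rfl

lemma periodic_comp_ofComplex_of_vadd {h : ℍ → ℂ} (hv : ∀ τ, h ((1 : ℝ) +ᵥ τ) = h τ) :
    Periodic (h ∘ ofComplex) ((1 : ℝ) : ℂ) := by
  intro z
  by_cases hz : 0 < z.im
  · have hz1 : 0 < (z + ((1 : ℝ) : ℂ)).im := by simpa using hz
    simp only [Function.comp_apply, ofComplex_apply_of_im_pos hz, ofComplex_apply_of_im_pos hz1]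
    rw [← hv ⟨z, hz⟩]
    congr 1
    ext
    simp [coe_vadd, add_comm]
  · have hz1 : ¬ 0 < (z + ((1 : ℝ) : ℂ)).im := by simpa using hz
    simp only [Function.comp_apply, ofComplex_apply_of_im_nonpos (not_lt.mp hz),
      ofComplex_apply_of_im_nonpos (not_lt.mp hz1)]

lemma const_of_smul_invariant {h : ℍ → ℂ} (hd : MDiff h)
    (hinv : ∀ (γ : SL(2, ℤ)) τ, h (γ • τ) = h τ) (hb : IsBoundedAtImInfty h) :
    ∃ c, ∀ τ, h τ = c := by
  have hslash (γ : SL(2, ℤ)) : h ∣[(0 : ℤ)] γ = h := by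
    ext τ
    rw [SL_slash_apply, hinv]
    simp
  let F : ModularForm 𝒮ℒ 0 :=
    { toFun := h
      slash_action_eq' := fun _ ⟨γ, hγ⟩ ↦ hγ ▸ hslash γ
      holo' := hd
      bdd_at_cusps' {c} hc := by
        rw [Subgroup.IsArithmetic.isCusp_iff_isCusp_SL2Z] at hc
        rw [OnePoint.isBoundedAt_iff_forall_SL2Z hc]
        intro γ _
        rwa [hslash γ] }
  obtain ⟨c, hc⟩ := ModularFormClass.levelOne_weight_zero_const F
  exact ⟨c, congrFun hc⟩

lemma mdifferentiable_qParam : MDiff fun τ : ℍ ↦ Periodic.qParam 1 (τ : ℂ) := by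
  rw [UpperHalfPlane.mdifferentiable_iff]
  refine (Periodic.differentiable_qParam (h := 1)).differentiableOn.congr fun z hz ↦ ?_
  simp [ofComplex_apply_of_im_pos hz]

lemma qParam_vadd (τ : ℍ) :
    Periodic.qParam 1 (((1 : ℝ) +ᵥ τ : ℍ) : ℂ) = Periodic.qParam 1 (τ : ℂ) := by
  rw [coe_vadd]
  simp only [Periodic.qParam, Complex.ofReal_one, div_one, mul_add, mul_one, Complex.exp_add,
    Complex.exp_two_pi_mul_I, one_mul]

lemma exists_polynomial_of_invariant {h : ℍ → ℂ} (hm : h ∈ moderateHolomorphic)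
    (hinv : ∀ (γ : SL(2, ℤ)) τ, h (γ • τ) = h τ) :
    ∃ G : ℂ[X], ∀ τ, h τ = G.eval (jFunction τ) := by
  obtain ⟨hd, k, hb⟩ := mem_moderateHolomorphic.mp hm
  clear hm
  induction k generalizing h with
  | zero =>
    obtain ⟨c, hc⟩ := const_of_smul_invariant hd hinv (by simpa using hb)
    exact ⟨C c, by simpa using hc⟩
  | succ k ih =>
    have hvadd {f : ℍ → ℂ} (hf : ∀ (γ : SL(2, ℤ)) τ, f (γ • τ) = f τ) (τ : ℍ) :
        f ((1 : ℝ) +ᵥ τ) = f τ := by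
      rw [← modular_T_smul, hf]
    let u : ℍ → ℂ := fun τ ↦ Periodic.qParam 1 (τ : ℂ) ^ (k + 1) * h τ
    have hu : MDiff u := (mdifferentiable_qParam.pow (k + 1)).mul hd
    have huper : Periodic (u ∘ ofComplex) 1 := by
      simpa using periodic_comp_ofComplex_of_vadd (h := u) fun τ ↦ by
        simp only [u, qParam_vadd, hvadd hinv]
    have hlim := tendsto_valueAtInfty huper hu hb
    set c := valueAtInfty u
    let h' : ℍ → ℂ := fun τ ↦ h τ - c * jFunction τ ^ (k + 1)
    have hinv' (γ : SL(2, ℤ)) (τ : ℍ) : h' (γ • τ) = h' τ := by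
      simp only [h', hinv, jFunction_smul]
    have hd' : MDiff h' :=
      hd.sub (mdifferentiable_const.mul (mdifferentiable_jFunction.pow (k + 1)))
    let v : ℍ → ℂ := fun τ ↦ Periodic.qParam 1 (τ : ℂ) ^ (k + 1) * h' τ
    have hv : MDiff v := (mdifferentiable_qParam.pow (k + 1)).mul hd'
    have hvper : Periodic (v ∘ ofComplex) ((1 : ℝ) : ℂ) :=
      periodic_comp_ofComplex_of_vadd (h := v) fun τ ↦ by
        simp only [v, qParam_vadd, hvadd hinv']
    have hvlim : Tendsto v atImInfty (𝓝 0) := by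
      have := hlim.sub ((tendsto_qParam_mul_jFunction.pow (k + 1)).const_mul c)
      simp only [one_pow, mul_one, sub_self] at this
      refine this.congr fun τ ↦ ?_
      simp only [u, v, h']
      ring
    have hdecay := IsZeroAtImInfty.exp_decay_atImInfty hvlim one_pos hvper hv
      (hvlim.isBigO_one ℝ)
    have hb' : IsBoundedAtImInfty fun τ ↦ Periodic.qParam 1 (τ : ℂ) ^ k * h' τ := by
      have hO : v =O[atImInfty] fun τ : ℍ ↦ Periodic.qParam 1 (τ : ℂ) := by
        refine hdecay.trans (isBigO_of_le _ fun τ ↦ ?_)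
        rw [Periodic.norm_qParam, Real.norm_of_nonneg (Real.exp_pos _).le]
        rfl
      have hdiv := hO.mul (isBigO_refl (fun τ : ℍ ↦ (Periodic.qParam 1 (τ : ℂ))⁻¹) atImInfty)
      refine (hdiv.congr (fun τ ↦ ?_) fun τ ↦ ?_ : (fun τ : ℍ ↦ _) =O[atImInfty] (1 : ℍ → ℂ)).trans
        (isBigO_of_le _ fun τ ↦ by simp)
      · have hq : Periodic.qParam 1 (τ : ℂ) ≠ 0 := Periodic.qParam_ne_zero _
        simp only [v]
        field_simp
        ring
      · exact mul_inv_cancel₀ (Periodic.qParam_ne_zero _)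
    obtain ⟨G, hG⟩ := ih hinv' hd' hb'
    refine ⟨G + C c * X ^ (k + 1), fun τ ↦ ?_⟩
    have := hG τ
    simp only [h'] at this
    simp [← this]

lemma tendsto_norm_jFunction : Tendsto (fun τ ↦ ‖jFunction τ‖) atImInfty atTop := by
  have hq : Tendsto (fun τ : ℍ ↦ ‖Periodic.qParam 1 (τ : ℂ)‖⁻¹) atImInfty atTop := by
    refine tendsto_inv_nhdsGT_zero.comp (tendsto_nhdsWithin_iff.mpr ⟨?_, ?_⟩)
    · simpa using (qParam_tendsto_atImInfty one_pos).norm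
    · exact Eventually.of_forall fun τ ↦ norm_pos_iff.mpr (Periodic.qParam_ne_zero _)
  have h := hq.atTop_mul_pos one_pos (by simpa using tendsto_qParam_mul_jFunction.norm)
  refine h.congr fun τ ↦ ?_
  rw [inv_mul_cancel_left₀ (norm_ne_zero_iff.mpr (Periodic.qParam_ne_zero _))]

lemma isOpen_range_of_mdifferentiable {f : ℍ → ℂ} (hf : MDiff f) (hc : ¬ ∃ c, ∀ τ, f τ = c) :
    IsOpen (Set.range f) := by
  have han := (UpperHalfPlane.mdifferentiable_iff.mp hf).analyticOnNhd isOpen_upperHalfPlaneSet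
  rcases han.is_constant_or_isOpen
    (Complex.isConnected_of_upperHalfPlane subset_rfl (by grind)).isPreconnected with ⟨w, hw⟩ | h
  · refine absurd ⟨w, fun τ ↦ ?_⟩ hc
    simpa using hw τ τ.im_pos
  · convert h _ subset_rfl isOpen_upperHalfPlaneSet
    ext w
    constructor
    · rintro ⟨τ, rfl⟩
      exact ⟨τ, τ.im_pos, by simp⟩
    · rintro ⟨z, -, rfl⟩
      exact ⟨_, rfl⟩

lemma jFunction_surjective : Surjective jFunction := by
  have hopen : IsOpen (Set.range jFunction) := by
    refine isOpen_range_of_mdifferentiable mdifferentiable_jFunction ?_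
    rintro ⟨c, hc⟩
    obtain ⟨τ, hτ⟩ := (tendsto_norm_jFunction.eventually_gt_atTop ‖c‖).exists
    exact hτ.ne' (by rw [hc])
  have hclosed : IsClosed (Set.range jFunction) := by
    refine isClosed_of_closure_subset fun w hw ↦ ?_
    obtain ⟨M, hM⟩ := (atImInfty_mem _).mp (tendsto_norm_jFunction.eventually_gt_atTop (‖w‖ + 1))
    have hK := (ModularGroup.isCompact_truncatedFundamentalDomain M).image
      mdifferentiable_jFunction.continuous
    have hsub : Set.range jFunction ∩ Metric.ball w 1 ⊆
        jFunction '' ModularGroup.truncatedFundamentalDomain M := by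
      rintro _ ⟨⟨τ, rfl⟩, hτ⟩
      obtain ⟨γ, hγ⟩ := ModularGroup.exists_smul_mem_fd τ
      refine ⟨γ • τ, ⟨hγ, ?_⟩, jFunction_smul γ τ⟩
      by_contra! hlt
      have h1 := hM (γ • τ) hlt.le
      simp only [Set.mem_ofPred_eq, jFunction_smul] at h1
      rw [Metric.mem_ball, dist_eq_norm] at hτ
      linarith [norm_le_norm_add_norm_sub' (jFunction τ) w]
    have hw' : w ∈ closure (Set.range jFunction ∩ Metric.ball w 1) := by
      rw [Set.inter_comm]
      exact Metric.isOpen_ball.inter_closure ⟨Metric.mem_ball_self one_pos, hw⟩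
    have := closure_minimal hsub hK.isClosed hw'
    exact Set.image_subset_range _ _ this
  exact Set.range_eq_univ.mp (IsClopen.eq_univ ⟨hclosed, hopen⟩ (Set.range_nonempty _))

/-! ### Normal forms of integral matrices -/

lemma exists_smul_mem_reps {m : ℤ} (hm : m ≠ 0) (A : FixedDetMatrix (Fin 2) ℤ m) :
    ∃ γ : SL(2, ℤ), γ • A ∈ FixedDetMatrices.reps m := by
  induction A using FixedDetMatrices.induction_on hm with
  | h0 A h10 h00 h01 h11 => exact ⟨1, by rw [one_smul]; exact ⟨h10, h00, h01, h11⟩⟩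
  | hS B hB =>
    obtain ⟨γ, hγ⟩ := hB
    exact ⟨γ * ModularGroup.S⁻¹, by rwa [SemigroupAction.mul_smul, inv_smul_smul]⟩
  | hT B hB =>
    obtain ⟨γ, hγ⟩ := hB
    exact ⟨γ * ModularGroup.T⁻¹, by rwa [SemigroupAction.mul_smul, inv_smul_smul]⟩

lemma exists_isCoprime_add_mul {a b d : ℤ} (hd : d ≠ 0)
    (h : ∀ r : ℤ, r ∣ a → r ∣ b → r ∣ d → IsUnit r) : ∃ x, IsCoprime (b + a * x) d := by
  have : NeZero d.natAbs := ⟨Int.natAbs_ne_zero.mpr hd⟩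
  set e := Int.gcd a d with he
  have hed : e ∣ d.natAbs := Int.gcd_dvd_natAbs_right a d
  have hb : IsCoprime b (e : ℤ) := by
    rw [Int.isCoprime_iff_gcd_eq_one]
    have h1 := h (Int.gcd b e) ((Int.gcd_dvd_right _ _).trans (Int.gcd_dvd_left _ _))
      (Int.gcd_dvd_left _ _) ((Int.gcd_dvd_right _ _).trans (Int.gcd_dvd_right _ _))
    simpa [Int.isUnit_iff_natAbs_eq] using h1
  obtain ⟨u, hu⟩ := ZMod.unitsMap_surjective hed (ZMod.unitOfIsCoprime b hb)
  obtain ⟨w, hw⟩ := ZMod.intCast_surjective (u : ZMod d.natAbs)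
  have hwd : IsCoprime w d := by
    have h1 : IsUnit ((w : ℤ) : ZMod d.natAbs) := hw ▸ u.isUnit
    have h2 := (ZMod.coe_int_isUnit_iff_isCoprime w d.natAbs).mp h1
    rw [isCoprime_comm, Int.isCoprime_iff_gcd_eq_one] at h2
    rw [Int.isCoprime_iff_gcd_eq_one]
    simpa [Int.gcd, Int.natAbs_abs] using h2
  have hwe : (e : ℤ) ∣ w - b := by
    rw [← ZMod.intCast_eq_intCast_iff_dvd_sub]
    have h1 := congrArg Units.val hu
    rw [ZMod.unitsMap_val, ← hw] at h1
    rw [ZMod.cast_intCast hed] at h1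
    simpa using h1.symm
  obtain ⟨k, hk⟩ := hwe
  have hbez := Int.gcd_eq_gcd_ab a d
  refine ⟨a.gcdA d * k, ?_⟩
  have h1 : b + a * (a.gcdA d * k) = w + d * (-(a.gcdB d * k)) := by
    rw [← he] at hbez
    rw [hbez] at hk
    linear_combination -hk
  rw [h1]
  exact hwd.add_mul_left_left _

lemma isPrimitiveIntMatrix_iff {A : Matrix (Fin 2) (Fin 2) ℤ} :
    IsPrimitiveIntMatrix A ↔ ∀ r : ℤ, (∀ i j, r ∣ A i j) → IsUnit r := by
  unfold IsPrimitiveIntMatrix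
  constructor
  · intro h r hr
    have h1 : r ∣ (Int.gcd (Int.gcd (A 0 0) (A 0 1)) (Int.gcd (A 1 0) (A 1 1)) : ℤ) :=
      Int.dvd_coe_gcd (Int.dvd_coe_gcd (hr _ _) (hr _ _)) (Int.dvd_coe_gcd (hr _ _) (hr _ _))
    rw [h] at h1
    exact isUnit_of_dvd_one (by simpa using h1)
  · intro h
    have h0 := h (Int.gcd (Int.gcd (A 0 0) (A 0 1)) (Int.gcd (A 1 0) (A 1 1)) : ℤ) (by
      simp only [Fin.forall_fin_two]
      exact ⟨⟨(Int.gcd_dvd_left _ _).trans (Int.gcd_dvd_left _ _),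
        (Int.gcd_dvd_left _ _).trans (Int.gcd_dvd_right _ _)⟩,
        (Int.gcd_dvd_right _ _).trans (Int.gcd_dvd_left _ _),
        (Int.gcd_dvd_right _ _).trans (Int.gcd_dvd_right _ _)⟩)
    simpa [Int.isUnit_iff_natAbs_eq] using h0

lemma exists_smith_form {A : Matrix (Fin 2) (Fin 2) ℤ} (hA : IsPrimitiveIntMatrix A) {N : ℤ}
    (hN : N ≠ 0) (hdet : A.det = N) :
    ∃ γ₁ γ₂ γ₃ : SL(2, ℤ), γ₁.1 * A * γ₂.1 = !![N, 0; 0, 1] * γ₃.1 := by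
  obtain ⟨γ, hγ⟩ := exists_smul_mem_reps hN ⟨A, hdet⟩
  set B : Matrix (Fin 2) (Fin 2) ℤ := γ.1 * A with hB
  have hAB : A = γ.1.adjugate * B := by
    rw [hB, ← Matrix.mul_assoc, Matrix.adjugate_mul, γ.2]
    simp
  have hBdet : B.det = N := by rw [hB, Matrix.det_mul, γ.2, hdet, one_mul]
  have hB10 : B 1 0 = 0 := hγ.1
  have hprim : ∀ r : ℤ, r ∣ B 0 0 → r ∣ B 0 1 → r ∣ B 1 1 → IsUnit r := by
    intro r h0 h1 h2
    refine isPrimitiveIntMatrix_iff.mp hA r fun i j ↦ ?_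
    have hrB : ∀ i j, r ∣ B i j := by
      simp only [Fin.forall_fin_two]
      exact ⟨⟨h0, h1⟩, hB10 ▸ dvd_zero r, h2⟩
    rw [hAB, Matrix.mul_apply]
    exact Finset.dvd_sum fun k _ ↦ (hrB k j).mul_left _
  have hBN : B 0 0 * B 1 1 = N := by rw [← hBdet, Matrix.det_fin_two, hB10]; ring
  have hd : B 1 1 ≠ 0 := right_ne_zero_of_mul (hBN ▸ hN)
  obtain ⟨x, s, t, hst⟩ := exists_isCoprime_add_mul hd hprim
  let u : SL(2, ℤ) := ⟨!![B 1 1, -(B 0 1 + B 0 0 * x); s, t], by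
    rw [Matrix.det_fin_two_of]; linarith⟩
  let v : SL(2, ℤ) := ⟨!![1, x; 0, 1], by simp [Matrix.det_fin_two_of]⟩
  let w : SL(2, ℤ) := ⟨!![1, 0; s * B 0 0, 1], by simp [Matrix.det_fin_two_of]⟩
  refine ⟨u * γ, v, w, ?_⟩
  have hu : (u * γ).1 * A = u.1 * B := Matrix.mul_assoc _ _ _
  rw [hu, Matrix.eta_fin_two B, hB10]
  simp only [u, v, w, Matrix.mul_fin_two]
  ext i j
  fin_cases i <;> fin_cases j <;> simp <;> linarith

/-! ### The action of `G` on the upper half plane -/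

/-- A positive-determinant integral matrix, viewed in `GL₂⁺(ℚ)`. -/
def ofInt (A : Matrix (Fin 2) (Fin 2) ℤ) (hA : 0 < A.det) : GL2QPos :=
  ⟨GeneralLinearGroup.mkOfDetNeZero (A.map (Int.castRingHom ℚ)) (by
      rw [← RingHom.mapMatrix_apply, ← RingHom.map_det]
      simpa using hA.ne'), by
    rw [Matrix.mem_glpos, Matrix.GeneralLinearGroup.val_det_apply]
    change 0 < (A.map (Int.castRingHom ℚ)).det
    rw [← RingHom.mapMatrix_apply, ← RingHom.map_det]
    simpa using hA⟩

lemma coe_ofInt (A : Matrix (Fin 2) (Fin 2) ℤ) (hA : 0 < A.det) :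
    ((ofInt A hA : GL (Fin 2) ℚ) : Matrix (Fin 2) (Fin 2) ℚ) = A.map (Int.castRingHom ℚ) := rfl

lemma GL2QPos_ext {g h : GL2QPos}
    (H : ((g : GL (Fin 2) ℚ) : Matrix (Fin 2) (Fin 2) ℚ) = (h : GL (Fin 2) ℚ)) : g = h :=
  Subtype.ext (Units.ext H)

lemma coe_GL2QPos_mul (g h : GL2QPos) :
    (((g * h : GL2QPos) : GL (Fin 2) ℚ) : Matrix (Fin 2) (Fin 2) ℚ) =
      ((g : GL (Fin 2) ℚ) : Matrix (Fin 2) (Fin 2) ℚ) * ((h : GL (Fin 2) ℚ)) := rfl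

lemma ofInt_mul {A B : Matrix (Fin 2) (Fin 2) ℤ} (hA : 0 < A.det) (hB : 0 < B.det) :
    ofInt A hA * ofInt B hB = ofInt (A * B) (by rw [Matrix.det_mul]; positivity) := by
  apply GL2QPos_ext
  rw [coe_GL2QPos_mul]
  simp only [coe_ofInt]
  exact (Matrix.map_mul (f := Int.castRingHom ℚ)).symm

lemma sl2ZtoGLQ_eq (γ : SL(2, ℤ)) : sl2ZtoGLQ γ = ofInt γ.1 (by rw [γ.2]; exact one_pos) :=
  GL2QPos_ext rfl

lemma sl2ZtoGQ_mul (γ γ' : SL(2, ℤ)) : sl2ZtoGQ (γ * γ') = sl2ZtoGQ γ * sl2ZtoGQ γ' := by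
  simp only [sl2ZtoGQ, sl2ZtoGLQ_eq, ← QuotientGroup.mk_mul, ofInt_mul]
  rfl

lemma exists_scalar_of_mem_center {z : GL2QPos} (hz : z ∈ Subgroup.center GL2QPos) :
    ∃ c : ℚ, ((z : GL (Fin 2) ℚ) : Matrix (Fin 2) (Fin 2) ℚ) = c • 1 := by
  rw [Subgroup.mem_center_iff] at hz
  have h1 := hz (ofInt !![1, 1; 0, 1] (by simp))
  have h2 := hz (ofInt !![1, 0; 1, 1] (by simp))
  replace h1 := congrArg (fun g : GL2QPos ↦ ((g : GL (Fin 2) ℚ) : Matrix (Fin 2) (Fin 2) ℚ)) h1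
  replace h2 := congrArg (fun g : GL2QPos ↦ ((g : GL (Fin 2) ℚ) : Matrix (Fin 2) (Fin 2) ℚ)) h2
  simp only [coe_GL2QPos_mul, coe_ofInt] at h1 h2
  set M := ((z : GL (Fin 2) ℚ) : Matrix (Fin 2) (Fin 2) ℚ)
  refine ⟨M 0 0, ?_⟩
  have a1 := congrFun₂ h1 0 0
  have a2 := congrFun₂ h1 0 1
  have a3 := congrFun₂ h2 0 0
  simp [Matrix.mul_apply, Fin.sum_univ_two] at a1 a2 a3
  ext i j
  fin_cases i <;> fin_cases j <;> simp <;> linarith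

lemma coe_toGLPosR_smul (g : GL2QPos) (τ : ℍ) :
    ((toGLPosR g • τ : ℍ) : ℂ) =
      ((((g : GL (Fin 2) ℚ) 0 0 : ℚ) : ℂ) * τ + (((g : GL (Fin 2) ℚ) 0 1 : ℚ) : ℂ)) /
      ((((g : GL (Fin 2) ℚ) 1 0 : ℚ) : ℂ) * τ + (((g : GL (Fin 2) ℚ) 1 1 : ℚ) : ℂ)) := by
  have := UpperHalfPlane.coe_smul_of_det_pos (g := (toGLPosR g : GL (Fin 2) ℝ)) (toGLPosR g).2 τ
  refine this.trans ?_
  have he (i j : Fin 2) : (toGLPosR g : GL (Fin 2) ℝ) i j = (((g : GL (Fin 2) ℚ) i j : ℚ) : ℝ) :=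
    rfl
  simp only [num, denom, he, Complex.ofReal_ratCast]

lemma toGLPosR_smul_eq_of_mem_center {z : GL2QPos} (hz : z ∈ Subgroup.center GL2QPos) (τ : ℍ) :
    toGLPosR z • τ = τ := by
  obtain ⟨c, hc⟩ := exists_scalar_of_mem_center hz
  have hc0 : (c : ℂ) ≠ 0 := by
    rintro h0
    have h1 := z.2
    rw [Matrix.mem_glpos, Matrix.GeneralLinearGroup.val_det_apply, hc] at h1
    simp_all
  ext
  rw [coe_toGLPosR_smul, hc]
  simp
  field_simp

lemma gqSmul_mk (g : GL2QPos) (τ : ℍ) : gqSmul (QuotientGroup.mk g) τ = toGLPosR g • τ := by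
  obtain ⟨z, hz⟩ := QuotientGroup.mk_out_eq_mul (Subgroup.center GL2QPos) g
  rw [gqSmul, hz, map_mul, SemigroupAction.mul_smul, toGLPosR_smul_eq_of_mem_center z.2]

lemma gqSmul_mul (g h : GQ) (τ : ℍ) : gqSmul (g * h) τ = gqSmul g (gqSmul h τ) := by
  induction g using QuotientGroup.induction_on with | _ g
  induction h using QuotientGroup.induction_on with | _ h
  rw [← QuotientGroup.mk_mul, gqSmul_mk, gqSmul_mk, gqSmul_mk, map_mul, SemigroupAction.mul_smul]

lemma gqSmul_one (τ : ℍ) : gqSmul 1 τ = τ := by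
  rw [← QuotientGroup.mk_one, gqSmul_mk, map_one, one_smul]

lemma gqSmul_sl2ZtoGQ (γ : SL(2, ℤ)) (τ : ℍ) : gqSmul (sl2ZtoGQ γ) τ = γ • τ := by
  rw [sl2ZtoGQ, gqSmul_mk]
  ext
  rw [coe_toGLPosR_smul, UpperHalfPlane.coe_specialLinearGroup_apply]
  simp [sl2ZtoGLQ_eq, coe_ofInt]

lemma jFunction_gqSmul_sl2ZtoGQ_mul (γ : SL(2, ℤ)) (g : GQ) (τ : ℍ) :
    jFunction (gqSmul (sl2ZtoGQ γ * g) τ) = jFunction (gqSmul g τ) := by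
  rw [gqSmul_mul, gqSmul_sl2ZtoGQ, jFunction_smul]

lemma gqSmul_inv_smul (g : GQ) (τ : ℍ) : gqSmul g (gqSmul g⁻¹ τ) = τ := by
  rw [← gqSmul_mul, mul_inv_cancel, gqSmul_one]

lemma gqSmul_surjective (g : GQ) : Surjective (gqSmul g) := fun τ ↦ ⟨_, gqSmul_inv_smul g τ⟩

lemma mdifferentiable_jFunction_gqSmul (g : GQ) : MDiff fun τ ↦ jFunction (gqSmul g τ) :=
  mdifferentiable_jFunction.comp
    (UpperHalfPlane.mdifferentiable_smul (g := (toGLPosR g.out : GL (Fin 2) ℝ)) (toGLPosR g.out).2)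

/-! ### Hecke translates of `j` -/

lemma out_eq_of_mk_eq {x : GL2QPos} {g : GQ} (h : QuotientGroup.mk x = g) :
    ∃ c : ℚ, ((g.out : GL (Fin 2) ℚ) : Matrix (Fin 2) (Fin 2) ℚ) =
      c • ((x : GL (Fin 2) ℚ) : Matrix (Fin 2) (Fin 2) ℚ) := by
  subst h
  obtain ⟨z, hz⟩ := QuotientGroup.mk_out_eq_mul (Subgroup.center GL2QPos) x
  obtain ⟨c, hc⟩ := exists_scalar_of_mem_center z.2
  refine ⟨c, ?_⟩
  rw [hz, coe_GL2QPos_mul, hc]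
  simp

lemma mk_ofInt_mem_GQdet {A : Matrix (Fin 2) (Fin 2) ℤ} (hA : 0 < A.det)
    (hp : IsPrimitiveIntMatrix A) {N : ℕ} (hN : A.det = N) :
    (QuotientGroup.mk (ofInt A hA) : GQ) ∈ GQdet N :=
  ⟨A, hp, hN, out_eq_of_mk_eq rfl⟩

lemma mk_eq_of_smul {x y : GL2QPos} {c : ℚ}
    (h : ((x : GL (Fin 2) ℚ) : Matrix (Fin 2) (Fin 2) ℚ) =
      c • ((y : GL (Fin 2) ℚ) : Matrix (Fin 2) (Fin 2) ℚ)) :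
    (QuotientGroup.mk x : GQ) = QuotientGroup.mk y := by
  rw [eq_comm, QuotientGroup.eq, Subgroup.mem_center_iff]
  intro z
  have hs : (((y⁻¹ * x : GL2QPos) : GL (Fin 2) ℚ) : Matrix (Fin 2) (Fin 2) ℚ) = c • 1 := by
    have h1 : (((y⁻¹ * y : GL2QPos) : GL (Fin 2) ℚ) : Matrix (Fin 2) (Fin 2) ℚ) = 1 := by
      rw [inv_mul_cancel]; rfl
    rw [coe_GL2QPos_mul] at h1 ⊢
    rw [h, Matrix.mul_smul, h1]
  apply GL2QPos_ext
  rw [coe_GL2QPos_mul z, coe_GL2QPos_mul (y⁻¹ * x), hs]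
  simp

lemma exists_ofInt_of_mem_GQdet {g : GQ} {N : ℕ} (hN : 0 < N) (hg : g ∈ GQdet N) :
    ∃ (A : Matrix (Fin 2) (Fin 2) ℤ) (hA : 0 < A.det), IsPrimitiveIntMatrix A ∧ A.det = N ∧
      g = QuotientGroup.mk (ofInt A hA) := by
  obtain ⟨A, hp, hdet, c, hc⟩ := hg
  have hA : 0 < A.det := by rw [hdet]; exact_mod_cast hN
  exact ⟨A, hA, hp, hdet, by rw [← mk_eq_of_smul (x := g.out) (y := ofInt A hA) hc,
    QuotientGroup.out_eq']⟩

lemma exists_mem_GQdet (g : GQ) : ∃ N : ℕ, 0 < N ∧ g ∈ GQdet N := by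
  set M := ((g.out : GL (Fin 2) ℚ) : Matrix (Fin 2) (Fin 2) ℚ) with hM
  have hMdet : 0 < M.det := g.out.2
  obtain ⟨D, hD⟩ := IsLocalization.exist_integer_multiples_of_finset (nonZeroDivisors ℤ)
    (Finset.univ.image fun p : Fin 2 × Fin 2 ↦ M p.1 p.2)
  have hD0 : ((D : ℤ) : ℚ) ≠ 0 := by exact_mod_cast nonZeroDivisors.coe_ne_zero D
  choose B hB using fun i j ↦ hD (M i j) (Finset.mem_image.mpr ⟨(i, j), by simp, rfl⟩)
  simp only [eq_intCast, zsmul_eq_mul] at hB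
  set e : ℤ := (Int.gcd (Int.gcd (B 0 0) (B 0 1)) (Int.gcd (B 1 0) (B 1 1)) : ℤ) with he
  have hdvd : ∀ i j, e ∣ B i j := by
    simp only [Fin.forall_fin_two]
    exact ⟨⟨(Int.gcd_dvd_left _ _).trans (Int.gcd_dvd_left _ _),
      (Int.gcd_dvd_left _ _).trans (Int.gcd_dvd_right _ _)⟩,
      (Int.gcd_dvd_right _ _).trans (Int.gcd_dvd_left _ _),
      (Int.gcd_dvd_right _ _).trans (Int.gcd_dvd_right _ _)⟩
  choose A hA using hdvd
  have hMA : M = ((e : ℚ) / (D : ℤ)) • (Matrix.of A).map (fun x ↦ (x : ℚ)) := by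
    ext i j
    have h1 := hB i j
    rw [hA i j] at h1
    push_cast at h1
    simp only [Matrix.smul_apply, Matrix.map_apply, Matrix.of_apply, smul_eq_mul]
    field_simp
    linarith
  have he0 : e ≠ 0 := by
    rintro h0
    rw [hMA, h0] at hMdet
    simp at hMdet
  have hprim : IsPrimitiveIntMatrix (Matrix.of A) := by
    rw [isPrimitiveIntMatrix_iff]
    intro r hr
    have h1 : e * r ∣ e := by
      have h2 (i j) : e * r ∣ B i j := by
        rw [hA i j]
        exact mul_dvd_mul_left e (hr i j)
      exact Int.dvd_coe_gcd (Int.dvd_coe_gcd (h2 _ _) (h2 _ _))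
        (Int.dvd_coe_gcd (h2 _ _) (h2 _ _))
    refine isUnit_of_dvd_one ?_
    exact (mul_dvd_mul_iff_left he0).mp (by simpa using h1)
  have hdet : 0 < (Matrix.of A).det := by
    have h1 : M.det = ((e : ℚ) / (D : ℤ)) ^ 2 * ((Matrix.of A).det : ℤ) := by
      rw [hMA, Matrix.det_smul, Fintype.card_fin]
      congr 1
      exact (Int.cast_det (R := ℚ) (Matrix.of A)).symm
    rw [h1] at hMdet
    have := pos_of_mul_pos_right hMdet (sq_nonneg _)
    exact_mod_cast this
  exact ⟨(Matrix.of A).det.toNat, by omega, Matrix.of A, hprim, by omega, _, hMA⟩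

/-- The function `τ ↦ j(gτ)`. -/
def heckeFun (g : GQ) (τ : ℍ) : ℂ := jFunction (gqSmul g τ)

lemma heckeFun_sl2ZtoGQ_mul (γ : SL(2, ℤ)) (g : GQ) : heckeFun (sl2ZtoGQ γ * g) = heckeFun g :=
  funext (jFunction_gqSmul_sl2ZtoGQ_mul γ g)

lemma heckeFun_smul (g : GQ) (γ : SL(2, ℤ)) (τ : ℍ) :
    heckeFun g (γ • τ) = heckeFun (g * sl2ZtoGQ γ) τ := by
  rw [heckeFun, heckeFun, gqSmul_mul, gqSmul_sl2ZtoGQ]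

lemma exists_heckeFun_eq_reps {A : Matrix (Fin 2) (Fin 2) ℤ} (hA : 0 < A.det) :
    ∃ B ∈ FixedDetMatrices.reps A.det, ∃ hB : 0 < B.1.det,
      heckeFun (QuotientGroup.mk (ofInt A hA)) = heckeFun (QuotientGroup.mk (ofInt B.1 hB)) := by
  obtain ⟨γ, hγ⟩ := exists_smul_mem_reps hA.ne' ⟨A, rfl⟩
  refine ⟨_, hγ, hA.trans_eq
    (Subtype.prop (p := fun B : Matrix (Fin 2) (Fin 2) ℤ ↦ B.det = A.det) _).symm, ?_⟩
  rw [← heckeFun_sl2ZtoGQ_mul γ, sl2ZtoGQ, sl2ZtoGLQ_eq, ← QuotientGroup.mk_mul, ofInt_mul]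
  rfl

lemma heckeFun_mem_moderateHolomorphic_of_upper {A : Matrix (Fin 2) (Fin 2) ℤ} (hA : 0 < A.det)
    (h10 : A 1 0 = 0) (h00 : 0 < A 0 0) :
    heckeFun (QuotientGroup.mk (ofInt A hA)) ∈ moderateHolomorphic := by
  have h11 : 0 < A 1 1 := by
    rw [Matrix.det_fin_two, h10, mul_zero, sub_zero] at hA
    exact pos_of_mul_pos_right hA h00.le
  have h00' : (0 : ℝ) < A 0 0 := by exact_mod_cast h00
  have h11' : (1 : ℝ) ≤ A 1 1 := by exact_mod_cast h11
  refine ⟨mdifferentiable_jFunction_gqSmul _, (A 0 0).toNat, ?_⟩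
  have him (τ : ℍ) : (gqSmul (QuotientGroup.mk (ofInt A hA)) τ).im = A 0 0 * τ.im / A 1 1 := by
    rw [gqSmul_mk, ← coe_im, coe_toGLPosR_smul, coe_ofInt]
    simp only [Matrix.map_apply, h10, eq_intCast, Rat.cast_intCast, Int.cast_zero, Rat.cast_zero,
      zero_mul, zero_add]
    rw [← Complex.ofReal_intCast, ← Complex.ofReal_intCast, ← Complex.ofReal_intCast,
      Complex.div_ofReal_im]
    simp
  have htend : Tendsto (gqSmul (QuotientGroup.mk (ofInt A hA))) atImInfty atImInfty := by
    rw [atImInfty, tendsto_comap_iff]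
    have : im ∘ gqSmul (QuotientGroup.mk (ofInt A hA)) = fun τ : ℍ ↦ A 0 0 / A 1 1 * τ.im := by
      ext τ
      simp only [Function.comp_apply, him]
      ring
    rw [this]
    exact tendsto_comap.const_mul_atTop (by positivity)
  have hO := (tendsto_qParam_mul_jFunction.comp htend).isBigO_one ℝ
  refine IsBigO.trans (isBigO_of_le _ fun τ ↦ ?_) hO
  simp only [Function.comp_apply, norm_mul, heckeFun]
  gcongr
  rw [norm_pow, Periodic.norm_qParam, Periodic.norm_qParam, ← Real.exp_nat_mul, coe_im, coe_im, him]
  apply Real.exp_le_exp.mpr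
  have hcast : (((A 0 0).toNat : ℕ) : ℝ) = A 0 0 := by
    exact_mod_cast Int.toNat_of_nonneg h00.le
  rw [hcast]
  have h1 : A 0 0 * τ.im / A 1 1 ≤ A 0 0 * τ.im :=
    div_le_self (by have := τ.im_pos; positivity) h11'
  nlinarith [Real.pi_pos]

lemma exists_ofInt (g : GQ) : ∃ (A : Matrix (Fin 2) (Fin 2) ℤ) (hA : 0 < A.det),
    g = QuotientGroup.mk (ofInt A hA) := by
  obtain ⟨N, hN, hg⟩ := exists_mem_GQdet g
  obtain ⟨A, hA, -, -, h⟩ := exists_ofInt_of_mem_GQdet hN hg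
  exact ⟨A, hA, h⟩

lemma heckeFun_mem_moderateHolomorphic (g : GQ) : heckeFun g ∈ moderateHolomorphic := by
  obtain ⟨A, hA, rfl⟩ := exists_ofInt g
  obtain ⟨B, ⟨h10, h00, -⟩, hB, h⟩ := exists_heckeFun_eq_reps hA
  rw [h]
  exact heckeFun_mem_moderateHolomorphic_of_upper hB h10 h00

lemma mdifferentiable_heckeFun (g : GQ) : MDiff (heckeFun g) := mdifferentiable_jFunction_gqSmul g

lemma finite_range_heckeFun_mul (g : GQ) :
    (Set.range fun γ : SL(2, ℤ) ↦ heckeFun (g * sl2ZtoGQ γ)).Finite := by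
  obtain ⟨A, hA, rfl⟩ := exists_ofInt g
  refine (Set.finite_range fun B : FixedDetMatrices.reps A.det ↦
    heckeFun (QuotientGroup.mk (ofInt B.1.1 (by rw [B.1.2]; exact hA)))).subset ?_
  rintro _ ⟨γ, rfl⟩
  have hdet : (A * γ.1).det = A.det := by rw [Matrix.det_mul, γ.2, mul_one]
  have hA' : 0 < (A * γ.1).det := hdet ▸ hA
  obtain ⟨⟨B, hB⟩, hBr, hB0, h⟩ := exists_heckeFun_eq_reps hA'
  refine ⟨⟨⟨B, hB.trans hdet⟩, hBr⟩, ?_⟩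
  simp only [sl2ZtoGQ, sl2ZtoGLQ_eq, ← QuotientGroup.mk_mul, ofInt_mul]
  exact h.symm

lemma heckeFun_surjective (g : GQ) : Surjective (heckeFun g) :=
  jFunction_surjective.comp (gqSmul_surjective g)

/-- The class of the diagonal matrix with entries `N, 1`. -/
def diagGQ (N : ℕ) (hN : 0 < N) : GQ :=
  QuotientGroup.mk (ofInt !![(N : ℤ), 0; 0, 1] (by simpa [Matrix.det_fin_two_of] using hN))

lemma diagGQ_mem_GQdet {N : ℕ} (hN : 0 < N) : diagGQ N hN ∈ GQdet N :=
  mk_ofInt_mem_GQdet _ (by simp [IsPrimitiveIntMatrix]) (by simp [Matrix.det_fin_two_of])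

lemma exists_eq_diagGQ_of_mem_GQdet {N : ℕ} (hN : 0 < N) {g : GQ} (hg : g ∈ GQdet N) :
    ∃ γ : SL(2, ℤ), heckeFun g = heckeFun (diagGQ N hN * sl2ZtoGQ γ) := by
  obtain ⟨A, hA, hp, hdet, rfl⟩ := exists_ofInt_of_mem_GQdet hN hg
  obtain ⟨γ₁, γ₂, γ₃, h⟩ := exists_smith_form hp (by exact_mod_cast hN.ne') hdet
  refine ⟨γ₃ * γ₂⁻¹, ?_⟩
  have h' : sl2ZtoGQ γ₁ * QuotientGroup.mk (ofInt A hA) * sl2ZtoGQ γ₂ =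
      diagGQ N hN * sl2ZtoGQ γ₃ := by
    simp only [sl2ZtoGQ, sl2ZtoGLQ_eq, diagGQ, ← QuotientGroup.mk_mul, ofInt_mul, h]
  have hone : sl2ZtoGQ γ₂ * sl2ZtoGQ γ₂⁻¹ = 1 := by
    rw [← sl2ZtoGQ_mul, mul_inv_cancel, sl2ZtoGQ, ← QuotientGroup.mk_one]
    congr 1
    apply GL2QPos_ext
    simp [sl2ZtoGLQ_eq, coe_ofInt]
  rw [sl2ZtoGQ_mul, ← mul_assoc, ← h', mul_assoc, hone, mul_one, heckeFun_sl2ZtoGQ_mul]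

lemma coe_gqSmul_diagGQ {N : ℕ} (hN : 0 < N) (τ : ℍ) :
    ((gqSmul (diagGQ N hN) τ : ℍ) : ℂ) = N * τ := by
  rw [diagGQ, gqSmul_mk, coe_toGLPosR_smul, coe_ofInt]
  simp

/-! ### Polynomials attached to invariant finite sets of functions -/

lemma mvPolynomial_eval_mem_moderateHolomorphic {σ : Type*} {f : σ → ℍ → ℂ}
    (hf : ∀ i, f i ∈ moderateHolomorphic) (p : MvPolynomial σ ℂ) :
    (fun τ ↦ MvPolynomial.eval (fun i ↦ f i τ) p) ∈ moderateHolomorphic := by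
  induction p using MvPolynomial.induction_on with
  | C a =>
    simp only [MvPolynomial.eval_C]
    exact moderateHolomorphic.algebraMap_mem a
  | add p q hp hq =>
    simp only [map_add]
    exact moderateHolomorphic.add_mem hp hq
  | mul_X p i hp =>
    simp only [map_mul, MvPolynomial.eval_X]
    exact moderateHolomorphic.mul_mem hp (hf i)

lemma exists_monic_of_invariant_finset (s : Finset (ℍ → ℂ))
    (hs : ∀ f ∈ s, f ∈ moderateHolomorphic)
    (hinv : ∀ γ : SL(2, ℤ), ∀ f ∈ s, (fun τ ↦ f (γ • τ)) ∈ s) :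
    ∃ F : ℂ[X][X], F.Monic ∧
      ∀ τ, F.map (evalRingHom (jFunction τ)) = ∏ f ∈ s, (X - C (f τ)) := by
  let P : (ℍ → ℂ)[X] := ∏ f ∈ s, (X - C f)
  have hPm : P.Monic := monic_prod_of_monic _ _ fun f _ ↦ monic_X_sub_C f
  have hPτ (τ : ℍ) : P.map (Pi.evalRingHom (fun _ ↦ ℂ) τ) = ∏ f ∈ s, (X - C (f τ)) := by
    simp [P, Polynomial.map_prod]
  have hcoeff (k : ℕ) : P.coeff k ∈ moderateHolomorphic := by
    let P' : moderateHolomorphic[X] := ∏ f ∈ s.attach, (X - C ⟨f.1, hs _ f.2⟩)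
    have h : P = P'.map moderateHolomorphic.val.toRingHom := by
      simp only [P, P', Polynomial.map_prod, Polynomial.map_sub, Polynomial.map_X,
        Polynomial.map_C]
      exact (s.prod_attach fun f ↦ X - C f).symm
    rw [h, coeff_map]
    exact (P'.coeff k).2
  have hinvP (γ : SL(2, ℤ)) (k : ℕ) (τ : ℍ) : P.coeff k (γ • τ) = P.coeff k τ := by
    let e : (ℍ → ℂ) → ℍ → ℂ := fun f τ ↦ f (γ • τ)
    have he : Injective e := fun f g h ↦ funext fun τ ↦ by
      simpa [e] using congrFun h (γ⁻¹ • τ)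
    have himg : s.image e = s := Finset.eq_of_subset_of_card_le
      (fun f hf ↦ by
        obtain ⟨f', hf', rfl⟩ := Finset.mem_image.mp hf
        exact hinv γ f' hf')
      (Finset.card_image_of_injective s he).ge
    have h1 : P.map (Pi.evalRingHom (fun _ ↦ ℂ) (γ • τ)) =
        P.map (Pi.evalRingHom (fun _ ↦ ℂ) τ) := by
      rw [hPτ, hPτ]
      conv_rhs => rw [← himg, Finset.prod_image he.injOn]
    simpa [coeff_map] using congrArg (coeff · k) h1
  choose G hG using fun k ↦ exists_polynomial_of_invariant (hcoeff k) (hinvP · k)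
  have hm : (X ^ P.natDegree + ∑ k ∈ Finset.range P.natDegree, C (G k) * X ^ k : ℂ[X][X]).Monic :=
    monic_X_pow_add <| (degree_sum_le _ _).trans_lt <|
      (Finset.sup_lt_iff (WithBot.bot_lt_coe _)).2 fun k hk ↦
        (degree_C_mul_X_pow_le k _).trans_lt (by simpa using hk)
  refine ⟨_, hm, fun τ ↦ ?_⟩
  rw [← hPτ]
  conv_rhs => rw [hPm.as_sum]
  simp [Polynomial.map_sum, hG]

lemma countable_zeros {f : ℍ → ℂ} (hf : MDiff f) (h0 : f ≠ 0) : {τ | f τ = 0}.Countable := by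
  have hU (τ : ℍ) : {z | z = τ ∨ f z ≠ 0} ∈ 𝓝 τ := by
    have h : ∀ᶠ z in 𝓝[≠] τ, f z ≠ 0 := by
      by_contra h
      exact h0 (eq_zero_of_frequently hf (fun h' ↦ h h'))
    filter_upwards [eventually_nhdsWithin_iff.mp h] with z hz
    exact or_iff_not_imp_left.mpr hz
  obtain ⟨s, hs, hcover⟩ := TopologicalSpace.countable_cover_nhds hU
  refine hs.mono fun τ hτ ↦ ?_
  have hmem : τ ∈ ⋃ x ∈ s, {z | z = x ∨ f z ≠ 0} := hcover ▸ Set.mem_univ τ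
  simp only [Set.mem_iUnion] at hmem
  obtain ⟨x, hx, rfl | h⟩ := hmem
  exacts [hx, absurd hτ h]

/-! ### The image of a tuple of Hecke translates is an irreducible algebraic curve -/

variable {n : ℕ}

lemma exists_polynomials_of_invariant_finset (s : Finset (Fin n → ℍ → ℂ))
    (hs : ∀ f ∈ s, ∀ i, f i ∈ moderateHolomorphic)
    (hinv : ∀ γ : SL(2, ℤ), ∀ f ∈ s, (fun i τ ↦ f i (γ • τ)) ∈ s) (i₀ : Fin n) :
    ∃ ps : Set (MvPolynomial (Fin n) ℂ), ∀ v τ, v i₀ = jFunction τ →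
      ((∀ p ∈ ps, MvPolynomial.eval v p = 0) ↔ ∃ f ∈ s, v = fun i ↦ f i τ) := by
  let L (t : ℕ) (f : Fin n → ℍ → ℂ) (τ : ℍ) : ℂ := ∑ i : Fin n, (t : ℂ) ^ (i : ℕ) * f i τ
  have hL (t : ℕ) (f) (hf : ∀ i, f i ∈ moderateHolomorphic) : L t f ∈ moderateHolomorphic := by
    have h := mvPolynomial_eval_mem_moderateHolomorphic hf
      (∑ i : Fin n, MvPolynomial.C ((t : ℂ) ^ (i : ℕ)) * MvPolynomial.X i)
    simpa [L] using h
  have hF (t : ℕ) := exists_monic_of_invariant_finset (s.image (L t))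
    (by
      intro f hf
      obtain ⟨f, hf', rfl⟩ := Finset.mem_image.mp hf
      exact hL t f (hs f hf'))
    (by
      intro γ f hf
      obtain ⟨f, hf', rfl⟩ := Finset.mem_image.mp hf
      exact Finset.mem_image.mpr ⟨_, hinv γ f hf', rfl⟩)
  choose F _ hF using hF
  let p (t : ℕ) : MvPolynomial (Fin n) ℂ :=
    (F t).eval₂ (eval₂RingHom MvPolynomial.C (MvPolynomial.X i₀))
      (∑ i : Fin n, MvPolynomial.C ((t : ℂ) ^ (i : ℕ)) * MvPolynomial.X i)
  have hp (t : ℕ) (v : Fin n → ℂ) (τ : ℍ) (hv : v i₀ = jFunction τ) :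
      MvPolynomial.eval v (p t) =
        ∏ f ∈ s.image (L t), (∑ i : Fin n, (t : ℂ) ^ (i : ℕ) * v i - f τ) := by
    have h1 : (MvPolynomial.eval v).comp (eval₂RingHom MvPolynomial.C (MvPolynomial.X i₀)) =
        evalRingHom (jFunction τ) := by
      ext <;> simp [hv]
    rw [Polynomial.hom_eval₂, h1, ← Polynomial.eval_map, hF]
    simp [eval_prod]
  refine ⟨Set.range p, fun v τ hv ↦ ?_⟩
  simp only [Set.forall_mem_range, hp _ v τ hv, Finset.prod_eq_zero_iff, Finset.mem_image,
    exists_exists_and_eq_and]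
  constructor
  · intro h
    choose f hf h using h
    obtain ⟨f₀, hinf⟩ := Finite.exists_infinite_fiber fun t ↦ (⟨f t, hf t⟩ : s)
    refine ⟨f₀, f₀.2, ?_⟩
    let Q : ℂ[X] := ∑ i : Fin n, C (v i - f₀.1 i τ) * X ^ (i : ℕ)
    have hQ : Q = 0 := by
      refine Polynomial.eq_zero_of_infinite_isRoot Q <|
        ((Set.infinite_coe_iff.mp hinf).image Nat.cast_injective.injOn).mono ?_
      rintro _ ⟨t, ht, rfl⟩
      have ht' : f t = f₀ := congrArg Subtype.val ht
      have := h t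
      rw [ht', ← Finset.sum_sub_distrib] at this
      simp only [Q, Set.mem_ofPred_eq, IsRoot.def, eval_finsetSum, eval_mul, eval_C, eval_pow,
        eval_X]
      rw [← this]
      exact Finset.sum_congr rfl fun i _ ↦ by ring
    ext i
    have hc := congrArg (coeff · (i : ℕ)) hQ
    simpa only [Q, finsetSum_coeff, coeff_C_mul, coeff_X_pow, Fin.val_inj, mul_ite, mul_one, mul_zero,
      Finset.sum_ite_eq, Finset.mem_univ, if_true, coeff_zero, sub_eq_zero] using hc
  · rintro ⟨f, hf, rfl⟩ t
    exact ⟨f, hf, sub_self _⟩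

lemma heckeImage_eq_range (g : Fin n → GQ) :
    heckeImage g = Set.range fun τ i ↦ heckeFun (g i) τ := rfl

lemma heckeImage_mul_right (g : Fin n → GQ) (h : GQ) :
    heckeImage (fun i ↦ g i * h) = heckeImage g := by
  have := (gqSmul_surjective h).range_comp fun τ i ↦ heckeFun (g i) τ
  rw [heckeImage_eq_range g, ← this, heckeImage]
  simp only [gqSmul_mul]
  rfl

lemma heckeFun_one : heckeFun 1 = jFunction := funext fun τ ↦ by rw [heckeFun, gqSmul_one]

/-- The finite set of tuples obtained from `(j(g₁τ), …, j(gₙτ))` by `τ ↦ γτ`. -/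
lemma finite_range_heckeFun_pi_mul (g : Fin n → GQ) :
    (Set.range fun (γ : SL(2, ℤ)) i ↦ heckeFun (g i * sl2ZtoGQ γ)).Finite := by
  refine (Set.Finite.pi' fun i ↦ finite_range_heckeFun_mul (g i)).subset ?_
  rintro _ ⟨γ, rfl⟩ i
  exact ⟨γ, rfl⟩

lemma exists_polynomials_heckeImage (g : Fin n → GQ) (i₀ : Fin n) :
    ∃ ps : Set (MvPolynomial (Fin n) ℂ), ∀ v τ, v i₀ = jFunction τ →
      ((∀ p ∈ ps, MvPolynomial.eval v p = 0) ↔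
        ∃ γ : SL(2, ℤ), v = fun i ↦ heckeFun (g i * sl2ZtoGQ γ) τ) := by
  obtain ⟨ps, hps⟩ := exists_polynomials_of_invariant_finset
    (finite_range_heckeFun_pi_mul g).toFinset
    (by simp [heckeFun_mem_moderateHolomorphic])
    (by
      intro γ f hf
      obtain ⟨γ', rfl⟩ := (Set.Finite.mem_toFinset _).mp hf
      refine (Set.Finite.mem_toFinset _).mpr ⟨γ' * γ, ?_⟩
      ext i τ
      simp only [heckeFun_smul, sl2ZtoGQ_mul, mul_assoc]) i₀
  refine ⟨ps, fun v τ hv ↦ ?_⟩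
  rw [hps v τ hv]
  simp

lemma isAlgebraicSet_heckeImage_of_eq_one (g : Fin n → GQ) (i₀ : Fin n) (hi₀ : g i₀ = 1) :
    IsAlgebraicSet (heckeImage g) := by
  obtain ⟨ps, hps⟩ := exists_polynomials_heckeImage g i₀
  refine ⟨ps, Set.ext fun v ↦ ?_⟩
  rw [Set.mem_ofPred_eq, heckeImage_eq_range]
  constructor
  · rintro ⟨τ, rfl⟩
    refine (hps _ τ (by simp [hi₀, heckeFun_one])).mpr ⟨1, ?_⟩
    ext i
    rw [← heckeFun_smul, one_smul]
  · intro hv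
    obtain ⟨τ, hτ⟩ := jFunction_surjective (v i₀)
    obtain ⟨γ, rfl⟩ := (hps v τ hτ.symm).mp hv
    exact ⟨γ • τ, funext fun i ↦ heckeFun_smul _ _ _⟩

lemma isAlgebraicSet_heckeImage (hn : 0 < n) (g : Fin n → GQ) : IsAlgebraicSet (heckeImage g) := by
  rw [← heckeImage_mul_right g (g ⟨0, hn⟩)⁻¹]
  exact isAlgebraicSet_heckeImage_of_eq_one _ ⟨0, hn⟩ (mul_inv_cancel _)

lemma finite_fibre_heckeImage (g : Fin n → GQ) (i₀ : Fin n) (z : ℂ) :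
    {v ∈ heckeImage g | v i₀ = z}.Finite := by
  rw [← heckeImage_mul_right g (g i₀)⁻¹]
  set g' := fun i ↦ g i * (g i₀)⁻¹
  have hi₀ : g' i₀ = 1 := mul_inv_cancel _
  obtain ⟨ps, hps⟩ := exists_polynomials_heckeImage g' i₀
  obtain ⟨τ, hτ⟩ := jFunction_surjective z
  refine ((finite_range_heckeFun_pi_mul g').image fun f i ↦ f i τ).subset ?_
  rintro _ ⟨⟨τ', rfl⟩, hv⟩
  have h1 := (hps (fun i ↦ heckeFun (g' i) τ') τ' (by simp [hi₀, heckeFun_one])).mpr ⟨1, by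
    ext i
    rw [← heckeFun_smul, one_smul]⟩
  obtain ⟨γ, hγ⟩ := (hps _ τ (hv.trans hτ.symm)).mp h1
  exact ⟨_, ⟨γ, rfl⟩, hγ.symm⟩

lemma mdifferentiable_eval_heckeFun (g : Fin n → GQ) (p : MvPolynomial (Fin n) ℂ) :
    MDiff fun τ ↦ MvPolynomial.eval (fun i ↦ heckeFun (g i) τ) p :=
  (mem_moderateHolomorphic.mp (mvPolynomial_eval_mem_moderateHolomorphic
    (fun i ↦ heckeFun_mem_moderateHolomorphic (g i)) p)).1

lemma heckeImage_subset_or_subset (g : Fin n → GQ) {A B : Set (Fin n → ℂ)}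
    (hA : IsAlgebraicSet A) (hB : IsAlgebraicSet B) (h : heckeImage g ⊆ A ∪ B) :
    heckeImage g ⊆ A ∨ heckeImage g ⊆ B := by
  obtain ⟨ps, rfl⟩ := hA
  obtain ⟨qs, rfl⟩ := hB
  rw [heckeImage_eq_range] at h ⊢
  simp only [Set.range_subset_iff, Set.mem_union, Set.mem_ofPred_eq] at h ⊢
  by_contra! ⟨⟨τ₁, p, hp, hp'⟩, ⟨τ₂, q, hq, hq'⟩⟩
  have h0 : (fun τ ↦ MvPolynomial.eval (fun i ↦ heckeFun (g i) τ) p) *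
      (fun τ ↦ MvPolynomial.eval (fun i ↦ heckeFun (g i) τ) q) = 0 := by
    ext τ
    rcases h τ with h | h
    · simp [h p hp]
    · simp [h q hq]
  rcases (mul_eq_zero_iff (mdifferentiable_eval_heckeFun g p)
    (mdifferentiable_eval_heckeFun g q)).mp h0 with h | h
  · exact hp' (congrFun h τ₁)
  · exact hq' (congrFun h τ₂)

lemma isIrreducibleAlgSet_heckeImage (hn : 0 < n) (g : Fin n → GQ) :
    IsIrreducibleAlgSet (heckeImage g) :=
  ⟨isAlgebraicSet_heckeImage hn g, Set.range_nonempty _,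
    fun _ _ hA hB ↦ heckeImage_subset_or_subset g hA hB⟩

lemma image_eval_heckeImage (g : Fin n → GQ) (i : Fin n) :
    (fun v ↦ v i) '' heckeImage g = Set.univ := by
  rw [heckeImage_eq_range, ← Set.range_comp]
  exact (heckeFun_surjective (g i)).range_eq

lemma isAlgebraicCurve_heckeImage (hn : 0 < n) (g : Fin n → GQ) :
    IsAlgebraicCurve (heckeImage g) := by
  refine ⟨isAlgebraicSet_heckeImage hn g, fun hfin ↦ ?_, ⟨0, hn⟩, finite_fibre_heckeImage g _⟩
  refine Set.infinite_univ (α := ℂ) ?_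
  rw [← image_eval_heckeImage g ⟨0, hn⟩]
  exact hfin.image _

lemma not_exists_const_heckeImage (g : Fin n → GQ) (i : Fin n) :
    ¬ ∃ c : ℂ, ∀ v ∈ heckeImage g, v i = c := by
  rintro ⟨c, hc⟩
  obtain ⟨τ, hτ⟩ := heckeFun_surjective (g i) (c + 1)
  have := hc _ ⟨τ, rfl⟩
  exact absurd (hτ.symm.trans this) (by simp)

lemma IsIrreducibleAlgSet.exists_subset_of_finite {V : Set (Fin n → ℂ)}
    (hV : IsIrreducibleAlgSet V) {𝒲 : Set (Set (Fin n → ℂ))} (hfin : 𝒲.Finite)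
    (halg : ∀ W ∈ 𝒲, IsAlgebraicSet W) (hsub : V ⊆ ⋃₀ 𝒲) : ∃ W ∈ 𝒲, V ⊆ W := by
  have key : ∀ 𝒲 : Set (Set (Fin n → ℂ)), 𝒲.Finite → (∀ W ∈ 𝒲, IsAlgebraicSet W) →
      IsAlgebraicSet (⋃₀ 𝒲) ∧ (V ⊆ ⋃₀ 𝒲 → ∃ W ∈ 𝒲, V ⊆ W) := by
    intro 𝒲 hfin
    induction 𝒲, hfin using Set.Finite.induction_on with
    | empty =>
      intro _
      refine ⟨⟨{1}, by ext; simp⟩, fun h ↦ ?_⟩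
      obtain ⟨v, hv⟩ := hV.2.1
      simpa using h hv
    | @insert W 𝒲 _ _ ih =>
      intro halg
      have hW := halg W (Set.mem_insert _ _)
      obtain ⟨h1, h2⟩ := ih fun W' hW' ↦ halg W' (Set.mem_insert_of_mem _ hW')
      rw [Set.sUnion_insert]
      refine ⟨?_, fun h ↦ ?_⟩
      · obtain ⟨ps, rfl⟩ := hW
        obtain ⟨qs, hqs⟩ := h1
        rw [hqs]
        refine ⟨Set.image2 (· * ·) ps qs, Set.ext fun v ↦ ?_⟩
        simp only [Set.mem_union, Set.mem_ofPred_eq, Set.forall_mem_image2, map_mul, mul_eq_zero]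
        grind
      · rcases hV.2.2 _ _ hW h1 h with h | h
        · exact ⟨W, Set.mem_insert _ _, h⟩
        · obtain ⟨W', hW', h'⟩ := h2 h
          exact ⟨W', Set.mem_insert_of_mem _ hW', h'⟩
  exact (key 𝒲 hfin halg).2 hsub

lemma heckeImage_subset_of_subset (hn : 0 < n) {g g' : Fin n → GQ}
    (h : heckeImage g ⊆ heckeImage g') : heckeImage g' ⊆ heckeImage g := by
  obtain ⟨ps, hps⟩ := isAlgebraicSet_heckeImage hn g
  rintro _ ⟨τ, rfl⟩
  rw [hps]
  by_contra hτ
  simp only [Set.mem_ofPred_eq, not_forall] at hτ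
  obtain ⟨p, hp, hτ⟩ := hτ
  have hcount := countable_zeros (mdifferentiable_eval_heckeFun g' p) fun h0 ↦
    hτ (congrFun h0 τ)
  have hsub : heckeImage g ⊆ (fun τ i ↦ heckeFun (g' i) τ) ''
      {τ | MvPolynomial.eval (fun i ↦ heckeFun (g' i) τ) p = 0} := by
    intro v hv
    obtain ⟨τ', rfl⟩ := h hv
    rw [hps] at hv
    exact ⟨τ', hv p hp, rfl⟩
  refine not_countable_complex ?_
  rw [← image_eval_heckeImage g ⟨0, hn⟩]
  exact ((hcount.image _).mono hsub).image _

/-! ### Special points -/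

lemma IsSpecial.gqSmul {τ : ℍ} (h : IsSpecial τ) (g : GQ) : IsSpecial (gqSmul g τ) := by
  obtain ⟨x, hx, hτ⟩ := h
  refine ⟨g * x * g⁻¹, by simpa using hx, ?_⟩
  rw [← gqSmul_mul, inv_mul_cancel_right, gqSmul_mul, hτ]

lemma isSpecial_I : IsSpecial I := by
  refine ⟨QuotientGroup.mk (ofInt !![0, -1; 1, 0] (by simp)), fun h ↦ ?_, ?_⟩
  · obtain ⟨c, hc⟩ := exists_scalar_of_mem_center ((QuotientGroup.eq_one_iff _).mp h)
    have := congrFun (congrFun hc 1) 0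
    simp [coe_ofInt] at this
  · ext
    rw [gqSmul_mk, coe_toGLPosR_smul, coe_ofInt]
    simp

lemma exists_isSpecial_coe_eq {x y : ℚ} (hy : 0 < y) :
    ∃ τ, IsSpecial τ ∧ (τ : ℂ) = x + y * Complex.I := by
  let A : Matrix (Fin 2) (Fin 2) ℤ := !![y.num * x.den, x.num * y.den; 0, x.den * y.den]
  have hx0 := x.den_pos
  have hy0 := y.den_pos
  have hA : 0 < A.det := by
    have := Rat.num_pos.mpr hy
    simp only [A, Matrix.det_fin_two_of, mul_zero, sub_zero]
    positivity
  refine ⟨gqSmul (QuotientGroup.mk (ofInt A hA)) I, isSpecial_I.gqSmul _, ?_⟩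
  rw [gqSmul_mk, coe_toGLPosR_smul, coe_ofInt]
  conv_rhs => rw [← Rat.num_div_den x, ← Rat.num_div_den y]
  have hx1 : (x.den : ℂ) ≠ 0 := by exact_mod_cast hx0.ne'
  have hy1 : (y.den : ℂ) ≠ 0 := by exact_mod_cast hy0.ne'
  simp [A]
  field_simp
  ring

lemma dense_specialSet : Dense SpecialSet := by
  intro τ
  rw [mem_closure_iff_nhds]
  intro U hU
  let u : ℝ × ℝ → ℍ := fun p ↦ ofComplex (p.1 + p.2 * Complex.I)
  have hτ : ((τ.re : ℂ) + τ.im * Complex.I) = τ := Complex.re_add_im τ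
  have hu : ContinuousAt u (τ.re, τ.im) := by
    refine ContinuousAt.comp (g := ofComplex) ?_ (by fun_prop)
    simp only [hτ]
    exact (contMDiffAt_ofComplex (n := 0) τ.im_pos).continuousAt
  have hpre : u ⁻¹' U ∩ {p | 0 < p.2} ∈ 𝓝 (τ.re, τ.im) := by
    refine Filter.inter_mem (hu (by simpa [u, hτ] using hU)) ?_
    exact (isOpen_lt continuous_const continuous_snd).mem_nhds τ.im_pos
  obtain ⟨⟨x, y⟩, hxU, hy⟩ :=
    (Rat.denseRange_cast (𝕜 := ℝ) |>.prodMap (Rat.denseRange_cast (𝕜 := ℝ))).mem_nhds hpre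
  obtain ⟨τ', hs, hτ'⟩ := exists_isSpecial_coe_eq (x := x) (y := y) (by simpa using hy)
  refine ⟨τ', ?_, hs⟩
  have : u (x, y) = τ' := by simp [u, ← hτ']
  rw [← this]
  exact hxU

lemma heckeFun_mem_jSpecialValues {τ : ℍ} (h : τ ∈ SpecialSet) (g : GQ) :
    heckeFun g τ ∈ jSpecialValues := ⟨_, IsSpecial.gqSmul h g, rfl⟩

lemma infinite_special_heckeImage (hn : 0 < n) (g : Fin n → GQ) :
    {v ∈ heckeImage g | ∀ i, v i ∈ jSpecialValues}.Infinite := by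
  intro hfin
  have hd : Dense (heckeFun (g ⟨0, hn⟩) '' SpecialSet) :=
    (heckeFun_surjective _).denseRange.dense_image (mdifferentiable_heckeFun _).continuous
      dense_specialSet
  have hfin_image : (heckeFun (g ⟨0, hn⟩) '' SpecialSet).Finite := by
    refine (hfin.image fun v ↦ v ⟨0, hn⟩).subset ?_
    rintro _ ⟨τ, hτ, rfl⟩
    exact ⟨_, ⟨⟨τ, rfl⟩, fun i ↦ heckeFun_mem_jSpecialValues hτ (g i)⟩, rfl⟩
  refine Set.infinite_univ (α := ℂ) ?_
  rw [← hd.closure_eq, hfin_image.isClosed.closure_eq]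
  exact hfin_image

/-! ### The field of definition -/

/-- Apply a `k`-linear functional to the coefficients of a polynomial. -/
def mapCoeff {σ : Type*} {k : Subfield ℂ} (π : ℂ →ₗ[k] k) (p : MvPolynomial σ ℂ) :
    MvPolynomial σ ℂ := ∑ m ∈ p.support, MvPolynomial.monomial m (π (p.coeff m) : ℂ)

lemma coeff_mapCoeff_mem {σ : Type*} {k : Subfield ℂ} (π : ℂ →ₗ[k] k) (p : MvPolynomial σ ℂ)
    (m : σ →₀ ℕ) : (mapCoeff π p).coeff m ∈ k := by
  rw [mapCoeff, MvPolynomial.coeff_sum]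
  refine sum_mem fun m' _ ↦ ?_
  rw [MvPolynomial.coeff_monomial]
  split_ifs
  exacts [(π _).2, zero_mem k]

lemma eval_mapCoeff {σ : Type*} {k : Subfield ℂ} (π : ℂ →ₗ[k] k) (p : MvPolynomial σ ℂ)
    (v : σ → ℂ) : MvPolynomial.eval v (mapCoeff π p) =
      ∑ m ∈ p.support, (π (p.coeff m) : ℂ) * m.prod fun i e ↦ v i ^ e := by
  simp only [mapCoeff, map_sum, MvPolynomial.eval_monomial]

lemma eval_mapCoeff_of_mem {σ : Type*} {k : Subfield ℂ} (π : ℂ →ₗ[k] k) (p : MvPolynomial σ ℂ)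
    {v : σ → ℂ} (hv : ∀ i, v i ∈ k) :
    MvPolynomial.eval v (mapCoeff π p) = π (MvPolynomial.eval v p) := by
  have hm (m : σ →₀ ℕ) : (m.prod fun i e ↦ v i ^ e) ∈ k := prod_mem fun i _ ↦ pow_mem (hv i) _
  rw [eval_mapCoeff, MvPolynomial.eval_eq, map_sum, AddSubmonoidClass.coe_finsetSum]
  refine Finset.sum_congr rfl fun m _ ↦ ?_
  have h : p.coeff m * (∏ i ∈ m.support, v i ^ m i) =
      (⟨_, hm m⟩ : k) • p.coeff m := mul_comm _ _
  rw [h, map_smul]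
  exact mul_comm _ _

lemma isAlgebraicSetOver_heckeImage (hn : 0 < n) (g : Fin n → GQ) :
    IsAlgebraicSetOver QjS (heckeImage g) := by
  obtain ⟨ps, hps⟩ := isAlgebraicSet_heckeImage hn g
  let b := Module.Basis.ofVectorSpace QjS ℂ
  have hvan (j) (p) (hp : p ∈ ps) (v) (hv : v ∈ heckeImage g) :
      MvPolynomial.eval v (mapCoeff (b.coord j) p) = 0 := by
    have hz : (fun τ ↦ MvPolynomial.eval (fun i ↦ heckeFun (g i) τ) (mapCoeff (b.coord j) p)) =
        fun _ ↦ 0 := by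
      refine Continuous.ext_on dense_specialSet (mdifferentiable_eval_heckeFun g _).continuous
        continuous_const fun τ hτ ↦ ?_
      have h0 : MvPolynomial.eval (fun i ↦ heckeFun (g i) τ) p = 0 := by
        have : (fun i ↦ heckeFun (g i) τ) ∈ heckeImage g := ⟨τ, rfl⟩
        rw [hps] at this
        exact this p hp
      rw [eval_mapCoeff_of_mem (k := QjS) _ _ fun i ↦
        Subfield.subset_closure (heckeFun_mem_jSpecialValues hτ (g i)), h0, map_zero]
      rfl
    obtain ⟨τ, rfl⟩ := hv
    exact congrFun hz τ
  refine ⟨{q | (∀ m, q.coeff m ∈ QjS) ∧ ∀ v ∈ heckeImage g, MvPolynomial.eval v q = 0},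
    fun q hq ↦ hq.1, Set.Subset.antisymm (fun v hv q hq ↦ hq.2 v hv) fun v hv ↦ ?_⟩
  rw [hps]
  intro p hp
  let J := p.support.biUnion fun m ↦ (b.repr (p.coeff m)).support
  have hc (m) (hm : m ∈ p.support) : p.coeff m = ∑ j ∈ J, (b.coord j (p.coeff m) : ℂ) * b j := by
    conv_lhs => rw [← b.linearCombination_repr (p.coeff m), Finsupp.linearCombination_apply]
    exact Finsupp.sum_of_support_subset _ (Finset.subset_biUnion_of_mem
      (fun m ↦ (b.repr (p.coeff m)).support) hm) _ (by simp)
  calc MvPolynomial.eval v p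
      = ∑ j ∈ J, b j * MvPolynomial.eval v (mapCoeff (b.coord j) p) := by
        simp only [eval_mapCoeff, Finset.mul_sum]
        rw [Finset.sum_comm, MvPolynomial.eval_eq]
        refine Finset.sum_congr rfl fun m hm ↦ ?_
        rw [hc m hm, Finset.sum_mul]
        refine Finset.sum_congr rfl fun j _ ↦ ?_
        rw [← hc m hm, Finsupp.prod]
        ring
    _ = 0 := Finset.sum_eq_zero fun j _ ↦ by
        rw [hv _ ⟨coeff_mapCoeff_mem _ p, fun w hw ↦ hvan j p hp w hw⟩, mul_zero]

/-! ### Functions with rational `q`-expansions -/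

/-- Functions on `ℍ` given by a power series in `q = exp(2πiτ)` with rational coefficients. -/
def ratQExpansion : Subalgebra ℚ (ℍ → ℂ) where
  carrier := {f | ∃ a : ℕ → ℚ, ∀ τ : ℍ,
    HasSum (fun m ↦ (a m : ℂ) * Periodic.qParam 1 (τ : ℂ) ^ m) (f τ)}
  mul_mem' := by
    rintro f g ⟨a, ha⟩ ⟨b, hb⟩
    refine ⟨fun m ↦ ∑ k ∈ Finset.range (m + 1), a k * b (m - k), fun τ ↦ ?_⟩
    have h := hasSum_sum_range_mul_of_summable_norm (ha τ).summable.norm (hb τ).summable.norm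
    rw [(ha τ).tsum_eq, (hb τ).tsum_eq] at h
    refine h.congr_fun fun m ↦ ?_
    push_cast
    rw [Finset.sum_mul]
    refine Finset.sum_congr rfl fun k hk ↦ ?_
    rw [← Nat.add_sub_of_le (Finset.mem_range_succ_iff.mp hk), Nat.add_sub_cancel_left, pow_add]
    ring
  add_mem' := by
    rintro f g ⟨a, ha⟩ ⟨b, hb⟩
    refine ⟨a + b, fun τ ↦ ?_⟩
    simpa [add_mul] using (ha τ).add (hb τ)
  algebraMap_mem' r := by
    refine ⟨Pi.single 0 r, fun τ ↦ ?_⟩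
    convert hasSum_single (f := fun m ↦ ((Pi.single (M := fun _ : ℕ ↦ ℚ) 0 r m : ℚ) : ℂ) *
      Periodic.qParam 1 (τ : ℂ) ^ m) 0 (fun m hm ↦ by simp [hm]) using 1
    simp

lemma mem_ratQExpansion {f : ℍ → ℂ} : f ∈ ratQExpansion ↔ ∃ a : ℕ → ℚ, ∀ τ : ℍ,
    HasSum (fun m ↦ (a m : ℂ) * Periodic.qParam 1 (τ : ℂ) ^ m) (f τ) := Iff.rfl

lemma E_mem_ratQExpansion {k : ℕ} (hk : 3 ≤ k) (hk2 : Even k) : ⇑(E hk) ∈ ratQExpansion := by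
  refine ⟨fun m ↦ if m = 0 then 1 else
    -(2 * k / _root_.bernoulli k) * ArithmeticFunction.sigma (k - 1) m, fun τ ↦ ?_⟩
  refine (ModularForm.hasSum_qExpansion (E hk) one_pos one_mem_strictPeriods_SL τ).congr_fun
    fun m ↦ ?_
  rw [EisensteinSeries.E_qExpansion_coeff hk hk2 m]
  split_ifs with h0 <;> simp [h0]

lemma comp_diagGQ_mem_ratQExpansion {N : ℕ} (hN : 0 < N) {f : ℍ → ℂ} (hf : f ∈ ratQExpansion) :
    (fun τ ↦ f (gqSmul (diagGQ N hN) τ)) ∈ ratQExpansion := by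
  obtain ⟨a, ha⟩ := hf
  have hinj : Injective (N * ·) := fun _ _ h ↦ Nat.eq_of_mul_eq_mul_left hN h
  refine ⟨extend (N * ·) a 0, fun τ ↦ ?_⟩
  rw [← hinj.hasSum_iff]
  · refine (ha (gqSmul (diagGQ N hN) τ)).congr_fun fun m ↦ ?_
    rw [coe_gqSmul_diagGQ, Function.comp_apply, hinj.extend_apply, pow_mul]
    congr 2
    simp only [Periodic.qParam, ← Complex.exp_nat_mul]
    congr 1
    ring
  · intro m hm
    rw [extend_apply' _ _ _ hm]
    simp

lemma eq_zero_of_hasSum_zero {c : ℕ → ℂ}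
    (h : ∀ τ : ℍ, HasSum (fun m ↦ c m * Periodic.qParam 1 (τ : ℂ) ^ m) 0) (m : ℕ) : c m = 0 := by
  have han : AnalyticAt ℂ (cuspFunction 1 (0 : ModularForm 𝒮ℒ 0)) 0 :=
    ModularFormClass.analyticAt_cuspFunction_zero _ one_pos one_mem_strictPeriods_SL
  rw [UpperHalfPlane.qExpansion_coeff_unique (0 : ModularForm 𝒮ℒ 0) one_pos han (c := c) h m,
    FunLike.coe_zero, qExpansion_zero]
  simp

lemma sum_map_mul_eq_zero {ι : Type*} (s : Finset ι) {x : ι → ℍ → ℂ}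
    (hx : ∀ i ∈ s, x i ∈ ratQExpansion) (π : ℂ →ₗ[ℚ] ℚ) (c : ι → ℂ)
    (h : ∀ τ, ∑ i ∈ s, c i * x i τ = 0) (τ : ℍ) : ∑ i ∈ s, (π (c i) : ℂ) * x i τ = 0 := by
  choose! a ha using fun i hi ↦ mem_ratQExpansion.mp (hx i hi)
  have hc (m : ℕ) : ∑ i ∈ s, c i * (a i m : ℂ) = 0 := by
    refine eq_zero_of_hasSum_zero (c := fun m ↦ ∑ i ∈ s, c i * (a i m : ℂ)) (fun τ ↦ ?_) m
    rw [← h τ]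
    simp only [Finset.sum_mul, mul_assoc]
    exact hasSum_sum fun i hi ↦ (ha i hi τ).mul_left _
  have hπ (m : ℕ) : ∑ i ∈ s, (π (c i) : ℂ) * (a i m : ℂ) = 0 := by
    have h1 := congrArg π (hc m)
    rw [map_sum, map_zero] at h1
    rw [← Rat.cast_zero, ← h1]
    push_cast
    refine Finset.sum_congr rfl fun i _ ↦ ?_
    rw [show c i * (a i m : ℂ) = (a i m) • c i by rw [Rat.smul_def, mul_comm], map_smul]
    simp [mul_comm]
  have hs : HasSum (fun m ↦ ∑ i ∈ s, (π (c i) : ℂ) * ((a i m : ℂ) * Periodic.qParam 1 (τ : ℂ) ^ m))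
      (∑ i ∈ s, (π (c i) : ℂ) * x i τ) := hasSum_sum fun i hi ↦ (ha i hi τ).mul_left _
  simp only [← mul_assoc, ← Finset.sum_mul, hπ, zero_mul] at hs
  exact hs.unique hasSum_zero

lemma jFunction_mul_eq (τ : ℍ) :
    jFunction τ * (E₄ τ ^ 3 - E₆ τ ^ 2) = 1728 * E₄ τ ^ 3 ∧ E₄ τ ^ 3 - E₆ τ ^ 2 ≠ 0 := by
  have h := discriminant_eq_E₄_cube_sub_E₆_sq τ
  have h0 := ModularForm.discriminant_ne_zero τ
  have h1 : E₄ τ ^ 3 - E₆ τ ^ 2 = 1728 * ModularForm.discriminant τ := by rw [h]; ring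
  rw [h1, jFunction_eq]
  refine ⟨by field_simp, mul_ne_zero (by norm_num) h0⟩

/-- A polynomial relation between `j(τ)` and `j(Nτ)` stays valid after applying a `ℚ`-linear
functional to its coefficients. -/
lemma sum_map_mul_jFunction_eq_zero {N : ℕ} (hN : 0 < N) (M : ℕ) (π : ℂ →ₗ[ℚ] ℚ)
    (c : ℕ × ℕ → ℂ)
    (h : ∀ τ, ∑ i ∈ Finset.range M ×ˢ Finset.range M,
      c i * (jFunction τ ^ i.1 * heckeFun (diagGQ N hN) τ ^ i.2) = 0) (τ : ℍ) :
    ∑ i ∈ Finset.range M ×ˢ Finset.range M,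
      (π (c i) : ℂ) * (jFunction τ ^ i.1 * heckeFun (diagGQ N hN) τ ^ i.2) = 0 := by
  let D : ℍ → ℂ := ⇑E₄ ^ 3 - ⇑E₆ ^ 2
  let A : ℍ → ℂ := algebraMap ℚ (ℍ → ℂ) 1728 * ⇑E₄ ^ 3
  have hjD (τ) : jFunction τ * D τ = A τ := by simpa [D, A] using (jFunction_mul_eq τ).1
  have hD0 (τ) : D τ ≠ 0 := (jFunction_mul_eq τ).2
  have h4 : ⇑E₄ ∈ ratQExpansion := E_mem_ratQExpansion _ (by decide)
  have h6 : ⇑E₆ ∈ ratQExpansion := E_mem_ratQExpansion _ (by decide)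
  have hD : D ∈ ratQExpansion := sub_mem (pow_mem h4 3) (pow_mem h6 2)
  have hA : A ∈ ratQExpansion := mul_mem (ratQExpansion.algebraMap_mem _) (pow_mem h4 3)
  let δ : ℍ → ℍ := gqSmul (diagGQ N hN)
  let x (i : ℕ × ℕ) : ℍ → ℂ :=
    (A ^ i.1 * D ^ (M - i.1)) * fun τ ↦ (A ^ i.2 * D ^ (M - i.2)) (δ τ)
  have hx (i : ℕ × ℕ) : x i ∈ ratQExpansion :=
    mul_mem (mul_mem (pow_mem hA _) (pow_mem hD _))
      (comp_diagGQ_mem_ratQExpansion hN (mul_mem (pow_mem hA _) (pow_mem hD _)))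
  have hpow (τ) (a : ℕ) (ha : a < M) : (A ^ a * D ^ (M - a)) τ = jFunction τ ^ a * D τ ^ M := by
    rw [Pi.mul_apply, Pi.pow_apply, Pi.pow_apply, ← hjD, mul_pow, mul_assoc, ← pow_add,
      Nat.add_sub_of_le ha.le]
  have hxe (d : ℕ × ℕ → ℂ) (τ) : ∑ i ∈ Finset.range M ×ˢ Finset.range M, d i * x i τ =
      (∑ i ∈ Finset.range M ×ˢ Finset.range M,
        d i * (jFunction τ ^ i.1 * heckeFun (diagGQ N hN) τ ^ i.2)) * (D τ ^ M * D (δ τ) ^ M) := by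
    rw [Finset.sum_mul]
    refine Finset.sum_congr rfl fun i hi ↦ ?_
    simp only [Finset.mem_product, Finset.mem_range] at hi
    simp only [x]
    rw [Pi.mul_apply, hpow τ _ hi.1, hpow (δ τ) _ hi.2, heckeFun]
    ring
  have h1 := sum_map_mul_eq_zero _ (fun i _ ↦ hx i) π c (fun τ ↦ by rw [hxe, h, zero_mul]) τ
  rw [hxe] at h1
  exact (mul_eq_zero.mp h1).resolve_right
    (mul_ne_zero (pow_ne_zero _ (hD0 _)) (pow_ne_zero _ (hD0 _)))

/-! ### The modular polynomial -/

lemma eval_map_evalRingHom_eq_sum {F : ℂ[X][X]} {M : ℕ} (h1 : F.natDegree < M)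
    (h2 : ∀ b, (F.coeff b).natDegree < M) (z w : ℂ) :
    (F.map (evalRingHom z)).eval w = ∑ i ∈ Finset.range M ×ˢ Finset.range M,
      (F.coeff i.2).coeff i.1 * (z ^ i.1 * w ^ i.2) := by
  rw [eval_map, eval₂_eq_sum_range' _ h1, Finset.sum_product_right]
  refine Finset.sum_congr rfl fun b _ ↦ ?_
  rw [coe_evalRingHom, eval_eq_sum_range' (h2 b), Finset.sum_mul]
  exact Finset.sum_congr rfl fun a _ ↦ by ring

lemma exists_natDegree_lt (F : ℂ[X][X]) :
    ∃ M, F.natDegree < M ∧ ∀ b, (F.coeff b).natDegree < M := by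
  refine ⟨F.natDegree + (F.support.sup fun b ↦ (F.coeff b).natDegree) + 1, by omega, fun b ↦ ?_⟩
  by_cases hb : b ∈ F.support
  · have := Finset.le_sup (f := fun b ↦ (F.coeff b).natDegree) hb
    omega
  · rw [notMem_support_iff.mp hb, natDegree_zero]
    omega

lemma eq_of_monic_of_eval_eq {s : Finset (ℍ → ℂ)} {F G : ℂ[X][X]} (hF : F.Monic) (hG : G.Monic)
    (hdeg : G.natDegree = F.natDegree) (hs : ∀ f ∈ s, MDiff f)
    (hFs : ∀ τ, F.map (evalRingHom (jFunction τ)) = ∏ f ∈ s, (X - C (f τ)))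
    (hGs : ∀ f ∈ s, ∀ τ, (G.map (evalRingHom (jFunction τ))).eval (f τ) = 0) : F = G := by
  let bad : Set ℍ := ⋃ f ∈ s, ⋃ g ∈ s, ⋃ _ : f ≠ g, {τ | (f - g) τ = 0}
  have hbad : bad.Countable := by
    refine s.countable_toSet.biUnion fun f hf ↦ s.countable_toSet.biUnion fun g hg ↦
      Set.countable_iUnion fun hfg ↦ countable_zeros ((hs f hf).sub (hs g hg)) ?_
    exact sub_ne_zero.mpr hfg
  have hcard : F.natDegree = s.card := by
    rw [← hF.natDegree_map (evalRingHom (jFunction I)), hFs]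
    exact natDegree_finsetProd_X_sub_C_eq_card s _
  have hgood (τ : ℍ) (hτ : τ ∉ bad) :
      F.map (evalRingHom (jFunction τ)) = G.map (evalRingHom (jFunction τ)) := by
    have hFm := hF.map (evalRingHom (jFunction τ))
    have hGm := hG.map (evalRingHom (jFunction τ))
    have hFd := hF.natDegree_map (evalRingHom (jFunction τ))
    have hGd := hG.natDegree_map (evalRingHom (jFunction τ))
    have hdF : (F.map (evalRingHom (jFunction τ))).degree = s.card := by
      rw [degree_eq_natDegree hFm.ne_zero, hFd, hcard]
    have hdG : (G.map (evalRingHom (jFunction τ))).degree = s.card := by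
      rw [degree_eq_natDegree hGm.ne_zero, hGd, hdeg, hcard]
    refine eq_of_degree_sub_lt_of_eval_index_eq (s := s) (v := fun f : ℍ → ℂ ↦ f τ) ?_ ?_ ?_
    · intro f hf g hg hfg
      by_contra hne
      refine hτ ?_
      simp only [bad, Set.mem_iUnion]
      exact ⟨f, hf, g, hg, hne, sub_eq_zero.mpr hfg⟩
    · rw [← hdF]
      exact degree_sub_lt_left (hdF.trans hdG.symm) hFm.ne_zero
        (hFm.leadingCoeff.trans hGm.leadingCoeff.symm)
    · intro f hf
      rw [hGs f hf, hFs, eval_prod]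
      exact Finset.prod_eq_zero hf (by simp)
  have hinf : (jFunction '' badᶜ).Infinite := by
    intro hfin
    refine not_countable_complex ?_
    rw [← jFunction_surjective.range_eq, ← Set.image_univ, ← Set.compl_union_self bad,
      Set.image_union]
    exact hfin.countable.union (hbad.image _)
  ext1 b
  refine eq_of_infinite_eval_eq _ _ (hinf.mono ?_)
  rintro _ ⟨τ, hτ, rfl⟩
  simpa [coeff_map] using congrArg (coeff · b) (hgood τ hτ)

lemma exists_linearMap_apply_one : ∃ π : ℂ →ₗ[ℚ] ℚ, π 1 = 1 := by
  obtain ⟨π, hπ⟩ := LinearMap.exists_leftInverse_of_injective (Algebra.linearMap ℚ ℂ)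
    (LinearMap.ker_eq_bot.mpr (algebraMap ℚ ℂ).injective)
  refine ⟨π, ?_⟩
  simpa using LinearMap.congr_fun hπ 1

/-- The finite set of functions `τ ↦ j(gτ)` for `g` in the double coset of `diag(N, 1)`. -/
def heckeFinset (N : ℕ) (hN : 0 < N) : Finset (ℍ → ℂ) :=
  (finite_range_heckeFun_mul (diagGQ N hN)).toFinset

lemma mem_heckeFinset {N : ℕ} {hN : 0 < N} {f : ℍ → ℂ} : f ∈ heckeFinset N hN ↔
    ∃ γ : SL(2, ℤ), heckeFun (diagGQ N hN * sl2ZtoGQ γ) = f := by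
  simp [heckeFinset]

lemma heckeFun_diagGQ_mem_heckeFinset {N : ℕ} (hN : 0 < N) :
    heckeFun (diagGQ N hN) ∈ heckeFinset N hN :=
  mem_heckeFinset.mpr ⟨1, funext fun τ ↦ by rw [← heckeFun_smul, one_smul]⟩

lemma exists_rational_monic {N : ℕ} (hN : 0 < N) :
    ∃ F : ℂ[X][X], (∀ b a, ∃ r : ℚ, (F.coeff b).coeff a = r) ∧
      ∀ τ, F.map (evalRingHom (jFunction τ)) = ∏ f ∈ heckeFinset N hN, (X - C (f τ)) := by
  have hs : ∀ f ∈ heckeFinset N hN, f ∈ moderateHolomorphic := by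
    intro f hf
    obtain ⟨γ, rfl⟩ := mem_heckeFinset.mp hf
    exact heckeFun_mem_moderateHolomorphic _
  obtain ⟨F, hF, hFs⟩ := exists_monic_of_invariant_finset (heckeFinset N hN) hs (by
    intro γ f hf
    obtain ⟨γ', rfl⟩ := mem_heckeFinset.mp hf
    refine mem_heckeFinset.mpr ⟨γ' * γ, ?_⟩
    ext τ
    rw [heckeFun_smul, sl2ZtoGQ_mul, mul_assoc])
  refine ⟨F, ?_, hFs⟩
  obtain ⟨π, hπ⟩ := exists_linearMap_apply_one
  obtain ⟨M, hM1, hM2⟩ := exists_natDegree_lt F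
  let G : ℂ[X][X] := ∑ b ∈ Finset.range M,
    C (∑ a ∈ Finset.range M, C (π ((F.coeff b).coeff a) : ℂ) * X ^ a) * X ^ b
  have hGcoeff (b a : ℕ) : (G.coeff b).coeff a = (π ((F.coeff b).coeff a) : ℂ) := by
    simp only [G, finsetSum_coeff, coeff_C_mul, coeff_X_pow, mul_ite, mul_one, mul_zero,
      Finset.sum_ite_eq, Finset.mem_range]
    split_ifs with hb
    · simp only [finsetSum_coeff, coeff_C_mul, coeff_X_pow, mul_ite, mul_one, mul_zero,
        Finset.sum_ite_eq, Finset.mem_range]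
      split_ifs with ha
      · rfl
      · rw [coeff_eq_zero_of_natDegree_lt ((hM2 b).trans_le (not_lt.mp ha))]
        simp
    · rw [coeff_eq_zero_of_natDegree_lt (hM1.trans_le (not_lt.mp hb))]
      simp
  have hG1 : G.natDegree ≤ F.natDegree := by
    refine natDegree_le_iff_coeff_eq_zero.mpr fun b hb ↦ ?_
    ext a
    rw [hGcoeff, coeff_eq_zero_of_natDegree_lt hb]
    simp
  have hG2 : G.coeff F.natDegree = 1 := by
    ext a
    rw [hGcoeff, hF.coeff_natDegree, coeff_one]
    split_ifs <;> simp [hπ]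
  have hGm : G.Monic := monic_of_natDegree_le_of_coeff_eq_one _ hG1 hG2
  have hGd : G.natDegree = F.natDegree :=
    natDegree_eq_of_le_of_coeff_ne_zero hG1 (by simp [hG2])
  have hG2' (b) : (G.coeff b).natDegree < M := by
    refine (natDegree_le_iff_coeff_eq_zero.mpr fun a ha ↦ ?_).trans_lt (hM2 b)
    rw [hGcoeff, coeff_eq_zero_of_natDegree_lt ha]
    simp
  have hG0 (τ) : (G.map (evalRingHom (jFunction τ))).eval (heckeFun (diagGQ N hN) τ) = 0 := by
    rw [eval_map_evalRingHom_eq_sum (hGd.trans_lt hM1) hG2']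
    simp only [hGcoeff]
    refine sum_map_mul_jFunction_eq_zero hN M π (fun i ↦ (F.coeff i.2).coeff i.1) (fun τ ↦ ?_) τ
    rw [← eval_map_evalRingHom_eq_sum hM1 hM2, hFs, eval_prod]
    exact Finset.prod_eq_zero (heckeFun_diagGQ_mem_heckeFinset hN) (by simp)
  have hFG : F = G := by
    refine eq_of_monic_of_eval_eq hF hGm hGd (fun f hf ↦ (hs f hf).1) hFs fun f hf τ ↦ ?_
    obtain ⟨γ, rfl⟩ := mem_heckeFinset.mp hf
    rw [← heckeFun_smul, ← jFunction_smul γ τ, hG0]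
  intro b a
  exact ⟨_, (congrArg (fun P : ℂ[X][X] ↦ (P.coeff b).coeff a) hFG).trans (hGcoeff b a)⟩

lemma exists_int_mvPolynomial {F : ℂ[X][X]} (hF : ∀ b a, ∃ r : ℚ, (F.coeff b).coeff a = r) :
    ∃ (P : MvPolynomial (Fin 2) ℤ) (m : ℤ), m ≠ 0 ∧
      ∀ z w : ℂ, MvPolynomial.aeval ![z, w] P = m * (F.map (evalRingHom z)).eval w := by
  choose r hr using hF
  obtain ⟨M, hM1, hM2⟩ := exists_natDegree_lt F
  obtain ⟨m, hm⟩ := IsLocalization.exist_integer_multiples (nonZeroDivisors ℤ)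
    (Finset.range M ×ˢ Finset.range M) fun i ↦ r i.2 i.1
  choose! k hk using hm
  refine ⟨∑ i ∈ Finset.range M ×ˢ Finset.range M, MvPolynomial.C (k i) *
    (MvPolynomial.X 0 ^ i.1 * MvPolynomial.X 1 ^ i.2), m, nonZeroDivisors.coe_ne_zero m,
    fun z w ↦ ?_⟩
  rw [eval_map_evalRingHom_eq_sum hM1 hM2, Finset.mul_sum, map_sum]
  refine Finset.sum_congr rfl fun i hi ↦ ?_
  have h : (k i : ℂ) = m * (F.coeff i.2).coeff i.1 := by
    rw [hr]
    have := congrArg (fun x : ℚ ↦ (x : ℂ)) (hk i hi)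
    simpa [Submonoid.smul_def, zsmul_eq_mul] using this
  simp [h, mul_assoc]

lemma exists_modularPoly {N : ℕ} (hN : 0 < N) : ∃ P : MvPolynomial (Fin 2) ℤ, P ≠ 0 ∧
    ∀ (τ : ℍ) (w : ℂ), MvPolynomial.aeval ![jFunction τ, w] P = 0 ↔
      ∃ f ∈ heckeFinset N hN, w = f τ := by
  obtain ⟨F, hF, hFs⟩ := exists_rational_monic hN
  obtain ⟨P, m, hm, hP⟩ := exists_int_mvPolynomial hF
  have hiff (τ : ℍ) (w : ℂ) : MvPolynomial.aeval ![jFunction τ, w] P = 0 ↔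
      ∃ f ∈ heckeFinset N hN, w = f τ := by
    rw [hP, hFs, mul_eq_zero, Int.cast_eq_zero, or_iff_right hm, eval_prod,
      Finset.prod_eq_zero_iff]
    simp [sub_eq_zero]
  refine ⟨P, ?_, hiff⟩
  rintro rfl
  obtain ⟨w, hw⟩ := ((heckeFinset N hN).image fun f ↦ f I).exists_notMem
  obtain ⟨f, hf, rfl⟩ := (hiff I w).mp (map_zero _)
  exact hw (Finset.mem_image_of_mem _ hf)

lemma aeval_modularPoly_eq_zero_iff {N : ℕ} (hN : 0 < N) (τ : ℍ) (w : ℂ) :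
    MvPolynomial.aeval ![jFunction τ, w] (modularPoly N) = 0 ↔
      ∃ γ : SL(2, ℤ), w = heckeFun (diagGQ N hN * sl2ZtoGQ γ) τ := by
  obtain ⟨P, hP0, hP⟩ := exists_modularPoly hN
  have hPz (z w : ℂ) : MvPolynomial.aeval ![z, w] P = 0 ↔
      ∃ (τ : ℍ) (g : GQ), g ∈ GQdet N ∧ jFunction τ = z ∧ jFunction (gqSmul g τ) = w := by
    constructor
    · intro h
      obtain ⟨τ, rfl⟩ := jFunction_surjective z
      obtain ⟨f, hf, rfl⟩ := (hP τ w).mp h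
      obtain ⟨γ, rfl⟩ := mem_heckeFinset.mp hf
      refine ⟨γ • τ, diagGQ N hN, diagGQ_mem_GQdet hN, jFunction_smul γ τ, ?_⟩
      exact heckeFun_smul _ _ _
    · rintro ⟨τ, g, hg, rfl, rfl⟩
      obtain ⟨γ, hγ⟩ := exists_eq_diagGQ_of_mem_GQdet hN hg
      exact (hP _ _).mpr ⟨_, mem_heckeFinset.mpr ⟨γ, rfl⟩, congrFun hγ τ⟩
  have hex : ∃ P : MvPolynomial (Fin 2) ℤ, P ≠ 0 ∧ ∀ z w : ℂ,
      (MvPolynomial.aeval ![z, w]) P = 0 ↔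
        ∃ (τ : ℍ) (g : GQ), g ∈ GQdet N ∧ jFunction τ = z ∧ jFunction (gqSmul g τ) = w :=
    ⟨P, hP0, hPz⟩
  rw [modularPoly, dif_pos hex, hex.choose_spec.2, ← hPz, hP]
  constructor
  · rintro ⟨f, hf, rfl⟩
    obtain ⟨γ, rfl⟩ := mem_heckeFinset.mp hf
    exact ⟨γ, rfl⟩
  · rintro ⟨γ, rfl⟩
    exact ⟨_, mem_heckeFinset.mpr ⟨γ, rfl⟩, rfl⟩

lemma isStronglySpecial_heckeImage (hn : 0 < n) (g : Fin n → GQ) :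
    IsStronglySpecial (heckeImage g) := by
  refine ⟨isIrreducibleAlgSet_heckeImage hn g, not_exists_const_heckeImage g, ?_⟩
  let i₀ : Fin n := ⟨0, hn⟩
  rw [← heckeImage_mul_right g (g i₀)⁻¹]
  set g' := fun i ↦ g i * (g i₀)⁻¹
  have hi₀ : g' i₀ = 1 := mul_inv_cancel _
  choose N hN hgN using fun i ↦ exists_mem_GQdet (g' i)
  refine ⟨Set.range fun l ↦ (i₀, l, N l), by rintro _ ⟨l, rfl⟩; exact hN l, ?_, ?_⟩
  · rintro _ ⟨τ, rfl⟩ _ ⟨l, rfl⟩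
    obtain ⟨γ, hγ⟩ := exists_eq_diagGQ_of_mem_GQdet (hN l) (hgN l)
    simp only [hi₀, gqSmul_one]
    exact (aeval_modularPoly_eq_zero_iff (hN l) τ _).mpr ⟨γ, congrFun hγ τ⟩
  · intro V' hV' hsub hV'R
    let 𝒲 : Set (Set (Fin n → ℂ)) :=
      Set.range fun γ : Fin n → SL(2, ℤ) ↦ heckeImage fun l ↦ diagGQ (N l) (hN l) * sl2ZtoGQ (γ l)
    have hfin : 𝒲.Finite := by
      refine ((Set.Finite.pi' fun l ↦ finite_range_heckeFun_mul (diagGQ (N l) (hN l))).image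
        fun f ↦ Set.range fun τ l ↦ f l τ).subset ?_
      rintro _ ⟨γ, rfl⟩
      exact ⟨fun l ↦ heckeFun (diagGQ (N l) (hN l) * sl2ZtoGQ (γ l)), fun l ↦ ⟨γ l, rfl⟩, rfl⟩
    have hcover : V' ⊆ ⋃₀ 𝒲 := by
      intro v hv
      obtain ⟨τ, hτ⟩ := jFunction_surjective (v i₀)
      have h (l : Fin n) : ∃ γ : SL(2, ℤ),
          v l = heckeFun (diagGQ (N l) (hN l) * sl2ZtoGQ γ) τ := by
        rw [← aeval_modularPoly_eq_zero_iff, hτ]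
        exact hV'R hv (i₀, l, N l) ⟨l, rfl⟩
      choose γ hγ using h
      exact ⟨_, ⟨γ, rfl⟩, τ, (funext hγ).symm⟩
    obtain ⟨_, ⟨γ, rfl⟩, hW⟩ := hV'.exists_subset_of_finite hfin
      (by rintro _ ⟨γ, rfl⟩; exact isAlgebraicSet_heckeImage hn _) hcover
    exact (hW.trans (heckeImage_subset_of_subset hn (hsub.trans hW))).antisymm hsub

end JPaper

/-- Lemma `lem_locus_irreducible`: for `g₁, ..., gₙ ∈ G`, the image of
the upper half plane under `f(z) = (j(g₁z), ..., j(gₙz))` is a geometrically irreducible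
algebraic curve defined over `ℚ(j(S))`; moreover it is a strongly special subvariety of
`ℂⁿ` and contains infinitely many special points. -/
theorem heckeImage_irreducible_curve (n : ℕ) (hn : 0 < n) (g : Fin n → JPaper.GQ) :
    JPaper.IsAlgebraicSetOver JPaper.QjS (JPaper.heckeImage g) ∧
    JPaper.IsIrreducibleAlgSet (JPaper.heckeImage g) ∧
    JPaper.IsAlgebraicCurve (JPaper.heckeImage g) ∧
    JPaper.IsStronglySpecial (JPaper.heckeImage g) ∧
    {v ∈ JPaper.heckeImage g | ∀ i, v i ∈ JPaper.jSpecialValues}.Infinite :=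
  ⟨JPaper.isAlgebraicSetOver_heckeImage hn g, JPaper.isIrreducibleAlgSet_heckeImage hn g,
    JPaper.isAlgebraicCurve_heckeImage hn g, JPaper.isStronglySpecial_heckeImage hn g,
    JPaper.infinite_special_heckeImage hn g⟩
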